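/- arXiv:2203.10655 — 4 statements merged into one kernel-verified Lean document; each statement's English description precedes it below -/
import Mathlib

section
/- Harrington–Kechris–Louveau dichotomy: let X be a Polish space and E an equivalence relation on X that is Borel as a subset of X × X. Then either E is smooth (there is a Borel measurable S : X → ℝ with x₁ E x₂ ↔ S x₁ = S x₂ for all x₁, x₂), or E₀ is Borel reducible to E (there is a Borel measurable φ : (ℕ → Bool) → X with f E₀ g ↔ φ f E φ g for all f, g). -/
/-- The equivalence relation `E₀` on Cantor space: eventual equality. -/
def E0 (f g : ℕ → Bool) : Prop := ∃ N : ℕ, ∀ n : ℕ, N ≤ n → f n = g n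

/-!
Call a set of indexed families of points of `X` small if some Borel `E`-invariant map to `ℝ`
determines the `E`-class of every point of every family on which it is constant. The small sets form
a `σ`-ideal, and it is proper if `E` is not smooth. The key point is that a set which is not small
stays so when its families are doubled, subject to the condition that a prescribed point of the
first copy and a prescribed point of the second one are `E`-equivalent, or that they are not:
otherwise Lusin separation provides an `E`-invariant Borel set witnessing that the original set was
small.

Doubling countably often, while shrinking in a Polish topology on `X × X` for which `E` is clopen,
leads to a Borel map `φ` from Cantor space to `X` such that any two finite words extend to words `p`
and `q` of the same length with `φ (p ⌢ z)` equivalent to `φ (q ⌢ z)` for all `z`, and also to words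
with `φ (p ⌢ z)` inequivalent to `φ (q ⌢ z)` for all `z`. The inequivalent extensions and Baire
category make the pullback of `E` along `φ` meagre. The equivalent extensions are the blocks from
which a reduction of `E₀` to the pullback is built, diagonalizing against closed nowhere dense sets
that cover the pullback.
-/

open Set Filter Topology Function PiNat
open MeasureTheory hiding cylinder

universe u

namespace GlimmEffros

section Reducibility

variable {X Y Z : Type*} [MeasurableSpace X] [MeasurableSpace Y] [MeasurableSpace Z]
  {E : X → X → Prop} {F : Y → Y → Prop} {G : Z → Z → Prop}

/-- Borel reducibility `E ≤_B F` of binary relations, not only for equivalence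
relations. -/
def BorelReducible (E : X → X → Prop) (F : Y → Y → Prop) : Prop :=
  ∃ φ : X → Y, Measurable φ ∧ ∀ x₁ x₂ : X, E x₁ x₂ ↔ F (φ x₁) (φ x₂)

lemma BorelReducible.trans (hEF : BorelReducible E F) (hFG : BorelReducible F G) :
    BorelReducible E G :=
  let ⟨φ, hφ, hEF⟩ := hEF
  let ⟨ψ, hψ, hFG⟩ := hFG
  ⟨ψ ∘ φ, hψ.comp hφ, fun x₁ x₂ => (hEF x₁ x₂).trans (hFG _ _)⟩

lemma BorelReducible.onFun {φ : X → Y} (hφ : Measurable φ) : BorelReducible (F on φ) F :=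
  ⟨φ, hφ, fun _ _ => Iff.rfl⟩

/-- Smoothness (concrete classifiability) of a relation: reducibility to equality on `ℝ`. -/
def Smooth (E : X → X → Prop) : Prop := BorelReducible E (Eq : ℝ → ℝ → Prop)

end Reducibility

section Separation

variable {X : Type*} [TopologicalSpace X] [PolishSpace X] [MeasurableSpace X] [BorelSpace X]
  {E : X → X → Prop}

lemma exists_measurableSet_superset_image (hBorel : MeasurableSet {p : X × X | E p.1 p.2})
    {Q : Set X} (hQ : AnalyticSet Q) (hQE : ∀ x y, E x y → y ∈ Q → x ∈ Q)
    {D : Set X} (hD : MeasurableSet D) (hDQ : Disjoint D Q) :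
    ∃ D', MeasurableSet D' ∧ Disjoint D' Q ∧ ∀ x y, E x y → x ∈ D → y ∈ D' := by
  have himage : AnalyticSet (Prod.snd '' {p : X × X | E p.1 p.2 ∧ p.1 ∈ D}) :=
    (hBorel.inter (measurable_fst hD)).analyticSet_image measurable_snd
  have hdisj : Disjoint (Prod.snd '' {p : X × X | E p.1 p.2 ∧ p.1 ∈ D}) Q := by
    rw [Set.disjoint_left]
    rintro _ ⟨⟨x, y⟩, ⟨hxy, hx⟩, rfl⟩ hy
    exact Set.disjoint_left.1 hDQ hx (hQE x y hxy hy)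
  obtain ⟨D', hsub, hD'Q, hD'⟩ := himage.measurablySeparable hQ hdisj
  exact ⟨D', hD', hD'Q.symm, fun x y hxy hx => hsub ⟨(x, y), ⟨hxy, hx⟩, rfl⟩⟩

/-- Lusin separation is iterated, absorbing the `E`-image of the current set at every step; the
union of the resulting sequence is closed under `E`. -/
lemma exists_invariant_measurableSet_separating
    (hBorel : MeasurableSet {p : X × X | E p.1 p.2}) {P Q : Set X} (hP : AnalyticSet P)
    (hQ : AnalyticSet Q) (hQE : ∀ x y, E x y → y ∈ Q → x ∈ Q) (hPQ : Disjoint P Q) :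
    ∃ D, MeasurableSet D ∧ (∀ x y, E x y → x ∈ D → y ∈ D) ∧ P ⊆ D ∧ Disjoint D Q := by
  obtain ⟨D₀, hPD₀, hQD₀, hD₀⟩ := hP.measurablySeparable hQ hPQ
  choose next hnext hnextQ hEnext using
    fun D : {D : Set X // MeasurableSet D ∧ Disjoint D Q} =>
      exists_measurableSet_superset_image hBorel hQ hQE D.2.1 D.2.2
  let D : ℕ → {D : Set X // MeasurableSet D ∧ Disjoint D Q} := fun n =>
    (fun D => ⟨next D, hnext D, hnextQ D⟩)^[n] ⟨D₀, hD₀, hQD₀.symm⟩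
  have hD_succ (n : ℕ) : (D (n + 1)).1 = next (D n) :=
    congrArg Subtype.val (iterate_succ_apply' _ n _)
  refine ⟨⋃ n, (D n).1, .iUnion fun n => (D n).2.1, fun x y hxy hx => ?_,
    hPD₀.trans (subset_iUnion (fun n => (D n).1) 0), disjoint_iUnion_left.2 fun n => (D n).2.2⟩
  obtain ⟨n, hn⟩ := mem_iUnion.1 hx
  exact mem_iUnion.2 ⟨n + 1, hD_succ n ▸ hEnext (D n) x y hxy hn⟩

end Separation

section SmoothAlong

variable {X ι : Type*} {E : X → X → Prop}

/-- The configurations in `𝒜` all of whose points have the same value under `f`. -/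
def unsplit {Y : Type*} (f : X → Y) (𝒜 : Set (ι → X)) : Set (ι → X) :=
  {γ ∈ 𝒜 | ∀ i j, f (γ i) = f (γ j)}

variable [MeasurableSpace X]

lemma measurableSet_unsplit [Countable ι] {Y : Type*} [MeasurableSpace Y] [MeasurableEq Y]
    {f : X → Y} (hf : Measurable f) {𝒜 : Set (ι → X)} (h𝒜 : MeasurableSet 𝒜) :
    MeasurableSet (unsplit f 𝒜) := by
  have heq : MeasurableSet {γ : ι → X | ∀ i j, f (γ i) = f (γ j)} := by
    simp only [Set.ofPred_forall]
    exact .iInter fun i => .iInter fun j => measurableSet_eq_fun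
      (hf.comp (measurable_pi_apply i)) (hf.comp (measurable_pi_apply j))
  exact h𝒜.inter heq

/-- Smoothness of `E` along a set `𝒜` of configurations, i.e. of indexed families of points: some
Borel `E`-invariant `f` determines the `E`-class of every point of every configuration in `𝒜` that
`f` does not split. These sets form a `σ`-ideal, and the construction of an embedding of `E₀`
takes place among the sets outside this ideal. -/
def SmoothAlong (E : X → X → Prop) (𝒜 : Set (ι → X)) : Prop :=
  ∃ f : X → ℝ, Measurable f ∧ (∀ x y, E x y → f x = f y) ∧
    ∀ γ ∈ unsplit f 𝒜, ∀ i x, f (γ i) = f x → E (γ i) x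

lemma SmoothAlong.of_measurable {Y : Type*} [MeasurableSpace Y] [StandardBorelSpace Y]
    {𝒜 : Set (ι → X)} {f : X → Y} (hf : Measurable f) (hfE : ∀ x y, E x y → f x = f y)
    (h : ∀ γ ∈ unsplit f 𝒜, ∀ i x, f (γ i) = f x → E (γ i) x) : SmoothAlong E 𝒜 := by
  have hg := measurableEmbedding_embeddingReal Y
  refine ⟨embeddingReal Y ∘ f, hg.measurable.comp hf,
    fun x y hxy => congrArg (embeddingReal Y) (hfE x y hxy), ?_⟩
  simpa only [unsplit, comp_apply, hg.injective.eq_iff] using h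

lemma smoothAlong_empty : SmoothAlong E (∅ : Set (ι → X)) :=
  ⟨fun _ => 0, measurable_const, fun _ _ _ => rfl, fun _ hγ => hγ.1.elim⟩

lemma SmoothAlong.mono {𝒜 ℬ : Set (ι → X)} (hℬ : SmoothAlong E ℬ) (h : 𝒜 ⊆ ℬ) :
    SmoothAlong E 𝒜 :=
  let ⟨f, hf, hfE, hℬ⟩ := hℬ
  ⟨f, hf, hfE, fun γ hγ => hℬ γ ⟨h hγ.1, hγ.2⟩⟩

lemma SmoothAlong.iUnion {κ : Type*} [Countable κ] {𝒜 : κ → Set (ι → X)}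
    (h : ∀ k, SmoothAlong E (𝒜 k)) : SmoothAlong E (⋃ k, 𝒜 k) := by
  choose f hf hfE h using h
  refine .of_measurable (f := fun x k => f k x) (measurable_pi_lambda _ hf)
    (fun x y hxy => funext fun k => hfE k x y hxy) fun γ hγ i x hx => ?_
  obtain ⟨k, hk⟩ := mem_iUnion.1 hγ.1
  exact h k γ ⟨hk, fun i j => congrFun (hγ.2 i j) k⟩ i x (congrFun hx k)

lemma SmoothAlong.smooth [Nonempty ι] (h : SmoothAlong E (univ : Set (ι → X))) : Smooth E :=
  let ⟨f, hf, hfE, h⟩ := h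
  ⟨f, hf, fun x y =>
    ⟨hfE x y, h (fun _ => x) ⟨mem_univ _, fun _ _ => rfl⟩ (Classical.arbitrary ι) y⟩⟩

variable [Countable ι]

/-- An invariant Borel set separating `B` from the `E`-saturation of the points with index `q` is
adjoined to `f`: an unsplit configuration then misses `B` altogether. -/
lemma SmoothAlong.of_analyticSet [TopologicalSpace X] [PolishSpace X] [BorelSpace X]
    (hE : Equivalence E) (hBorel : MeasurableSet {p : X × X | E p.1 p.2})
    {𝒜 : Set (ι → X)} (h𝒜 : MeasurableSet 𝒜) {f : X → ℝ} (hf : Measurable f)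
    (hfE : ∀ x y, E x y → f x = f y) (p q : ι) {B : Set X} (hB : AnalyticSet B)
    (hqB : ∀ γ ∈ unsplit f 𝒜, ∀ x ∈ B, ¬ E (γ q) x)
    (hpB : ∀ γ ∈ unsplit f 𝒜, ∀ x, f (γ p) = f x → ¬ E (γ p) x → γ p ∈ B ∨ x ∈ B) :
    SmoothAlong E 𝒜 := by
  have heval : Measurable fun t : (ι → X) × X => (t.1 q, t.2) :=
    ((measurable_pi_apply q).comp measurable_fst).prodMk measurable_snd
  have hQ : AnalyticSet (Prod.snd '' {t : (ι → X) × X | t.1 ∈ unsplit f 𝒜 ∧ E (t.1 q) t.2}) := by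
    refine MeasurableSet.analyticSet_image (.inter ?_ ?_) measurable_snd
    · exact measurable_fst (measurableSet_unsplit hf h𝒜)
    · exact heval hBorel
  obtain ⟨D, hD, hDE, hBD, hDQ⟩ := exists_invariant_measurableSet_separating hBorel hB hQ
    (by
      rintro x y hxy ⟨⟨γ, y⟩, ⟨hγ, hγy⟩, rfl⟩
      exact ⟨(γ, x), ⟨hγ, hE.trans hγy (hE.symm hxy)⟩, rfl⟩)
    (by
      rw [Set.disjoint_left]
      rintro x hx ⟨⟨γ, x⟩, ⟨hγ, hγx⟩, rfl⟩
      exact hqB γ hγ x hx hγx)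
  refine .of_measurable (f := fun x => (f x, x ∈ D)) (hf.prodMk hD.mem)
    (fun x y hxy => Prod.ext (hfE x y hxy) (propext ⟨hDE x y hxy, hDE y x (hE.symm hxy)⟩)) ?_
  rintro γ ⟨hγ𝒜, hγ⟩ i x hix
  simp only [Prod.mk.injEq, eq_iff_iff] at hγ hix
  have hγf : γ ∈ unsplit f 𝒜 := ⟨hγ𝒜, fun i j => (hγ i j).1⟩
  have hqD : γ q ∉ D := fun h =>
    Set.disjoint_left.1 hDQ h ⟨(γ, γ q), ⟨hγf, hE.refl _⟩, rfl⟩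
  have hclass : ∀ y, f (γ p) = f y → y ∉ D → E (γ p) y := by
    intro y hy hyD
    by_contra hne
    rcases hpB γ hγf y hy hne with h | h
    · exact hqD ((hγ p q).2.1 (hBD h))
    · exact hyD (hBD h)
  have hi : E (γ p) (γ i) := hclass _ (hγ p i).1 fun h => hqD ((hγ i q).2.1 h)
  exact hE.trans (hE.symm hi) <|
    hclass x ((hγ p i).1.trans hix.1) fun h => hqD ((hγ i q).2.1 (hix.2.2 h))

/-- For `c = True` the set of points `γ p` whose `E`-class is smaller than their `f`-fibre cannot
meet the `E`-saturation of the points `γ q`; for `c = False` the same holds for the set of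
witnesses `x` to this failure. -/
lemma SmoothAlong.of_edges [StandardBorelSpace X] (hE : Equivalence E)
    (hBorel : MeasurableSet {p : X × X | E p.1 p.2}) {𝒜 : Set (ι → X)} (h𝒜 : MeasurableSet 𝒜)
    {f : X → ℝ} (hf : Measurable f) (hfE : ∀ x y, E x y → f x = f y) (p q : ι) (c : Prop)
    (h : ∀ γ ∈ unsplit f 𝒜, ∀ δ ∈ unsplit f 𝒜, f (γ p) = f (δ q) → (E (γ p) (δ q) ↔ c) →
      ∀ x, f (γ p) = f x → E (γ p) x) :
    SmoothAlong E 𝒜 := by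
  let := upgradeStandardBorel X
  let T : Set ((ι → X) × X) := {t | t.1 ∈ unsplit f 𝒜 ∧ f (t.1 p) = f t.2 ∧ ¬ E (t.1 p) t.2}
  have heval : Measurable fun t : (ι → X) × X => t.1 p :=
    (measurable_pi_apply p).comp measurable_fst
  have hT : MeasurableSet T := (measurable_fst (measurableSet_unsplit hf h𝒜)).inter <|
    (measurableSet_eq_fun (hf.comp heval) (hf.comp measurable_snd)).inter
      ((heval.prodMk measurable_snd) hBorel.compl)
  by_cases hc : c
  · refine .of_analyticSet hE hBorel h𝒜 hf hfE p q (hT.analyticSet_image heval) ?_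
      fun γ hγ x hx hne => .inl ⟨(γ, x), ⟨hγ, hx, hne⟩, rfl⟩
    rintro δ hδ _ ⟨⟨γ, x⟩, ⟨hγ, hx, hne⟩, rfl⟩ hδγ
    have hγδ : E (γ p) (δ q) := hE.symm hδγ
    exact hne (h γ hγ δ hδ (hfE _ _ hγδ) (iff_of_true hγδ hc) x hx)
  · refine .of_analyticSet hE hBorel h𝒜 hf hfE p q (hT.analyticSet_image measurable_snd) ?_
      fun γ hγ x hx hne => .inr ⟨(γ, x), ⟨hγ, hx, hne⟩, rfl⟩
    rintro δ hδ _ ⟨⟨γ, x⟩, ⟨hγ, hx, hne⟩, rfl⟩ hδx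
    have hγδ : ¬ E (γ p) (δ q) := fun hγδ => hne (hE.trans hγδ hδx)
    exact hne (h γ hγ δ hδ (hx.trans (hfE _ _ hδx).symm) (iff_of_false hγδ hc) x hx)

end SmoothAlong


section Joined

variable {X : Type*} {n : ℕ}

/-- The initial segment of length `n` of a sequence. -/
def word {α : Type*} (x : ℕ → α) (n : ℕ) : Fin n → α := fun i => x i

lemma word_succ {α : Type*} (x : ℕ → α) (n : ℕ) :
    word x (n + 1) = Fin.snoc (α := fun _ => α) (word x n) (x n) :=
  (Fin.snoc_init_self (word x (n + 1))).symm

/-- The part of a configuration indexed by the words with last letter `b`. -/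
def half (b : Bool) (γ : (Fin (n + 1) → Bool) → X) : (Fin n → Bool) → X :=
  fun w => γ (Fin.snoc (α := fun _ => Bool) w b)

lemma half_word (γ : (Fin (n + 1) → Bool) → X) (x : ℕ → Bool) :
    half (x n) γ (word x n) = γ (word x (n + 1)) :=
  congrArg γ (word_succ x n).symm

/-- The configurations with both halves in `𝒜` for which `R` relates the point `p` of the first
half to the point `q` of the second one. -/
def joined (R : X → X → Prop) (𝒜 : Set ((Fin n → Bool) → X)) (p q : Fin n → Bool) :
    Set ((Fin (n + 1) → Bool) → X) :=
  {γ | (∀ b, half b γ ∈ 𝒜) ∧ R (half false γ p) (half true γ q)}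

variable [MeasurableSpace X] {𝒜 : Set ((Fin n → Bool) → X)} {p q : Fin n → Bool}

lemma measurable_half (b : Bool) : Measurable (half b : ((Fin (n + 1) → Bool) → X) → _) :=
  measurable_pi_lambda _ fun _ => measurable_pi_apply _

lemma measurableSet_joined {R : X → X → Prop} (hR : MeasurableSet {p : X × X | R p.1 p.2})
    (h𝒜 : MeasurableSet 𝒜) : MeasurableSet (joined R 𝒜 p q) := by
  have hhalf : MeasurableSet {γ : (Fin (n + 1) → Bool) → X | ∀ b, half b γ ∈ 𝒜} := by
    simp only [Set.ofPred_forall]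
    exact .iInter fun b => measurable_half b h𝒜
  have hpair : Measurable fun γ : (Fin (n + 1) → Bool) → X => (half false γ p, half true γ q) :=
    (measurable_pi_apply _).prodMk (measurable_pi_apply _)
  exact hhalf.inter (hpair hR)

variable {E : X → X → Prop} [StandardBorelSpace X]

lemma SmoothAlong.of_joined (hE : Equivalence E) (hBorel : MeasurableSet {p : X × X | E p.1 p.2})
    (h𝒜 : MeasurableSet 𝒜) {c : Prop}
    (h : SmoothAlong E (joined (fun x y => E x y ↔ c) 𝒜 p q)) : SmoothAlong E 𝒜 := by
  obtain ⟨f, hf, hfE, h⟩ := h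
  refine .of_edges hE hBorel h𝒜 hf hfE p q c ?_
  rintro γ ⟨hγ, hγf⟩ δ ⟨hδ, hδf⟩ hγδ hc x hx
  let η : (Fin (n + 1) → Bool) → X := fun w =>
    bif w (Fin.last n) then δ (Fin.init w) else γ (Fin.init w)
  have hη_false : half false η = γ := by ext w; simp [half, η]
  have hη_true : half true η = δ := by ext w; simp [half, η]
  have hη : η ∈ joined (fun x y => E x y ↔ c) 𝒜 p q :=
    ⟨Bool.forall_bool.2 ⟨hη_false ▸ hγ, hη_true ▸ hδ⟩, by rwa [hη_false, hη_true]⟩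
  have hηf (w) : f (η w) = f (γ p) := by
    cases hw : w (Fin.last n)
    · simpa only [η, hw, cond_false] using hγf _ p
    · simpa only [η, hw, cond_true, hγδ] using hδf _ q
  have hηp : η (Fin.snoc (α := fun _ => Bool) p false) = γ p := congrFun hη_false p
  have hclass := h η ⟨hη, fun v w => (hηf v).trans (hηf w).symm⟩ (Fin.snoc p false) x
  rw [hηp] at hclass
  exact hclass hx

end Joined

section Schemes

variable {X ι M : Type*} {E : X → X → Prop}

/-- A scheme of nonempty sets of configurations indexed by the words of length `n`, compatible with
taking halves, in which the pairs of points of a configuration are pinned down, in the metric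
pulled back along `Ψ`, ever more accurately. -/
structure IsScheme [PseudoMetricSpace M] (Ψ : X × X → M)
    (𝒜 : ∀ n, Set ((Fin n → Bool) → X)) : Prop where
  nonempty (n : ℕ) : (𝒜 n).Nonempty
  half_mem (n : ℕ) (b : Bool) : ∀ γ ∈ 𝒜 (n + 1), half b γ ∈ 𝒜 n
  dist_le (n : ℕ) : ∀ γ ∈ 𝒜 (n + 1), ∀ δ ∈ 𝒜 (n + 1), ∀ v w,
    dist (Ψ (γ v, γ w)) (Ψ (δ v, δ w)) ≤ (1 / 2) ^ n

lemma IsScheme.exists_mem_apply_word_eq [PseudoMetricSpace M] {Ψ : X × X → M}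
    {𝒜 : ∀ n, Set ((Fin n → Bool) → X)} (h𝒜 : IsScheme Ψ 𝒜) {x y : ℕ → Bool} {n k : ℕ}
    (hnk : n ≤ k) (hxy : ∀ i, n ≤ i → x i = y i) {γ : (Fin k → Bool) → X} (hγ : γ ∈ 𝒜 k) :
    ∃ η ∈ 𝒜 n, η (word x n) = γ (word x k) ∧ η (word y n) = γ (word y k) := by
  induction k, hnk using Nat.le_induction with
  | base => exact ⟨γ, hγ, rfl, rfl⟩
  | succ k hk ih =>
    obtain ⟨η, hη, hηx, hηy⟩ := ih (h𝒜.half_mem k (x k) γ hγ)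
    refine ⟨η, hη, hηx.trans (half_word γ x), hηy.trans ?_⟩
    rw [hxy k hk, half_word]

variable [MeasurableSpace X]

lemma exists_subset_dist_le [PseudoMetricSpace M]
    [TopologicalSpace.SeparableSpace M] [MeasurableSpace M] [OpensMeasurableSpace M]
    {H : (ι → X) → M} (hH : Measurable H) {𝒜 : Set (ι → X)} (h𝒜 : MeasurableSet 𝒜)
    (hns : ¬ SmoothAlong E 𝒜) {ε : ℝ} (hε : 0 < ε) :
    ∃ ℬ ⊆ 𝒜, MeasurableSet ℬ ∧ ¬ SmoothAlong E ℬ ∧ ∀ γ ∈ ℬ, ∀ δ ∈ ℬ, dist (H γ) (H δ) ≤ ε := by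
  obtain ⟨s, hs, hsd⟩ := TopologicalSpace.exists_countable_dense M
  have := hs.to_subtype
  have hcover : 𝒜 ⊆ ⋃ m : s, 𝒜 ∩ H ⁻¹' Metric.ball m (ε / 2) := fun γ hγ =>
    let ⟨m, hm, hγm⟩ := hsd.exists_dist_lt (H γ) (half_pos hε)
    mem_iUnion.2 ⟨⟨m, hm⟩, hγ, hγm⟩
  obtain ⟨m, hm⟩ : ∃ m : s, ¬ SmoothAlong E (𝒜 ∩ H ⁻¹' Metric.ball m (ε / 2)) := by
    by_contra! h
    exact hns ((SmoothAlong.iUnion h).mono hcover)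
  refine ⟨_, inter_subset_left, h𝒜.inter (hH Metric.isOpen_ball.measurableSet), hm, ?_⟩
  rintro γ ⟨-, hγ⟩ δ ⟨-, hδ⟩
  linarith [dist_triangle_right (H γ) (H δ) m, Metric.mem_ball.1 hγ, Metric.mem_ball.1 hδ]

lemma exists_isScheme_subset_joined [StandardBorelSpace X] [PseudoMetricSpace M]
    [SecondCountableTopology M] [MeasurableSpace M] [OpensMeasurableSpace M]
    {Ψ : X × X → M} (hΨ : Measurable Ψ) (hE : Equivalence E)
    (hBorel : MeasurableSet {p : X × X | E p.1 p.2}) (hns : ¬ Smooth E)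
    (p q : ∀ n, Fin n → Bool) (c : ℕ → Prop) :
    ∃ 𝒜, IsScheme Ψ 𝒜 ∧
      ∀ n, 𝒜 (n + 1) ⊆ joined (fun x y => E x y ↔ c n) (𝒜 n) (p n) (q n) := by
  have hstep (n : ℕ) (𝒜 : {𝒜 : Set ((Fin n → Bool) → X) // MeasurableSet 𝒜 ∧ ¬ SmoothAlong E 𝒜}) :
      ∃ ℬ ⊆ joined (fun x y => E x y ↔ c n) 𝒜.1 (p n) (q n), MeasurableSet ℬ ∧
        ¬ SmoothAlong E ℬ ∧ ∀ γ ∈ ℬ, ∀ δ ∈ ℬ,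
          dist (fun t : (Fin (n + 1) → Bool) × (Fin (n + 1) → Bool) => Ψ (γ t.1, γ t.2))
            (fun t => Ψ (δ t.1, δ t.2)) ≤ (1 / 2) ^ n := by
    have hc : MeasurableSet {p : X × X | E p.1 p.2 ↔ c n} := by
      by_cases h : c n <;> simp only [h, iff_true, iff_false]
      exacts [hBorel, hBorel.compl]
    refine exists_subset_dist_le (measurable_pi_lambda _ fun t => hΨ.comp <|
      (measurable_pi_apply _).prodMk (measurable_pi_apply _))
      (measurableSet_joined hc 𝒜.2.1) (mt (.of_joined hE hBorel 𝒜.2.1) 𝒜.2.2) (by positivity)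
  choose next hnext hmeas hnext_ns hdist using hstep
  let 𝒜 (n : ℕ) : {𝒜 : Set ((Fin n → Bool) → X) // MeasurableSet 𝒜 ∧ ¬ SmoothAlong E 𝒜} :=
    Nat.rec ⟨univ, .univ, fun h => hns h.smooth⟩
      (fun n 𝒜 => ⟨next n 𝒜, hmeas n 𝒜, hnext_ns n 𝒜⟩) n
  refine ⟨fun n => (𝒜 n).1, ⟨fun n => ?_, fun n b γ hγ => (hnext n (𝒜 n) hγ).1 b,
    fun n γ hγ δ hδ v w => ?_⟩, fun n => hnext n (𝒜 n)⟩
  · exact nonempty_iff_ne_empty.2 fun h => (𝒜 n).2.2 (h ▸ smoothAlong_empty)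
  · exact (dist_le_pi_dist _ _ (v, w)).trans (hdist n (𝒜 n) γ hγ δ hδ)

/-- If `x` and `y` agree from `n` on, all later approximations to the pair of limit points come from
a single configuration in `𝒜 n`. -/
lemma IsScheme.exists_tendsto [TopologicalSpace X] [MetricSpace M] [CompleteSpace M]
    [MeasurableSpace M] {e : M ≃ᵐ X × X} (he : Continuous e)
    {𝒜 : ∀ n, Set ((Fin n → Bool) → X)} (h𝒜 : IsScheme e.symm 𝒜)
    {γ : ∀ n, (Fin n → Bool) → X} (hγ : ∀ n, γ n ∈ 𝒜 n) {n : ℕ} {x y : ℕ → Bool}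
    (hxy : ∀ i, n ≤ i → x i = y i) :
    ∃ m ∈ closure ((fun η => e.symm (η (word x n), η (word y n))) '' 𝒜 n),
      Tendsto (fun k => (γ k (word x k), γ k (word y k))) atTop (𝓝 (e m)) := by
  let pair (k : ℕ) : X × X := (γ k (word x k), γ k (word y k))
  have hpair {i k : ℕ} (hni : n ≤ i) (hik : i ≤ k) :
      ∃ η ∈ 𝒜 i, (η (word x i), η (word y i)) = pair k :=
    let ⟨η, hη, hηx, hηy⟩ :=
      h𝒜.exists_mem_apply_word_eq hik (fun j hj => hxy j (hni.trans hj)) (hγ k)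
    ⟨η, hη, Prod.ext hηx hηy⟩
  have hcauchy : CauchySeq fun k => e.symm (pair (k + (n + 1))) := by
    refine cauchySeq_of_le_geometric (1 / 2) ((1 / 2) ^ n) (by norm_num) fun k => ?_
    obtain ⟨η, hη, hηpair⟩ := hpair (by omega : n ≤ k + (n + 1)) (Nat.le_succ _)
    rw [mul_comm, ← pow_add, add_right_comm k 1, ← Nat.succ_eq_add_one, ← hηpair]
    exact h𝒜.dist_le (k + n) _ (hγ _) η hη _ _
  obtain ⟨m, hm⟩ := cauchySeq_tendsto_of_complete hcauchy
  refine ⟨m, mem_closure_of_tendsto hm (.of_forall fun k => ?_),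
    (tendsto_add_atTop_iff_nat (n + 1)).1 ?_⟩
  · obtain ⟨η, hη, hηpair⟩ := hpair le_rfl (by omega : n ≤ k + (n + 1))
    exact ⟨η, hη, congrArg e.symm hηpair⟩
  · simpa only [comp_def, e.apply_symm_apply] using (he.tendsto m).comp hm

lemma IsScheme.exists_measurable_mem_closure [TopologicalSpace X] [PolishSpace X] [BorelSpace X]
    [MetricSpace M] [CompleteSpace M] [MeasurableSpace M] {e : M ≃ᵐ X × X} (he : Continuous e)
    {𝒜 : ∀ n, Set ((Fin n → Bool) → X)} (h𝒜 : IsScheme e.symm 𝒜) :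
    ∃ φ : (ℕ → Bool) → X, Measurable φ ∧ ∀ n x y, (∀ i, n ≤ i → x i = y i) →
      e.symm (φ x, φ y) ∈ closure ((fun η => e.symm (η (word x n), η (word y n))) '' 𝒜 n) := by
  choose γ hγ using h𝒜.nonempty
  choose φ hφ using fun x =>
    let ⟨m, _, hm⟩ := h𝒜.exists_tendsto he hγ (x := x) (y := x) fun i (_ : 0 ≤ i) => rfl
    (⟨(e m).1, hm.fst_nhds⟩ : ∃ a, Tendsto (fun k => γ k (word x k)) atTop (𝓝 a))
  refine ⟨φ, measurable_of_tendsto_metrizable (fun k => ?_) (tendsto_pi_nhds.2 hφ),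
    fun n x y hxy => ?_⟩
  · exact (measurable_of_finite (γ k)).comp (measurable_pi_lambda _ fun i => measurable_pi_apply _)
  · obtain ⟨m, hm, hlim⟩ := h𝒜.exists_tendsto he hγ hxy
    rwa [tendsto_nhds_unique ((hφ x).prodMk_nhds (hφ y)) hlim, e.symm_apply_apply]

lemma exists_continuous_measurableEquiv_isClopen_preimage {Y : Type u} [TopologicalSpace Y]
    [PolishSpace Y] [MeasurableSpace Y] [BorelSpace Y] {s : Set Y} (hs : MeasurableSet s) :
    ∃ (M : Type u) (_ : TopologicalSpace M) (_ : PolishSpace M) (_ : MeasurableSpace M)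
      (_ : BorelSpace M) (e : M ≃ᵐ Y), Continuous e ∧ IsClopen (e ⁻¹' s) := by
  have hY := BorelSpace.measurable_eq (α := Y)
  obtain ⟨t, hle, ht, hclosed, hopen⟩ := hs.isClopenable
  have hborel : @BorelSpace Y t _ :=
    ⟨hY.trans (borel_eq_borel_of_le ht ‹_› hle).symm⟩
  exact ⟨Y, t, ht, _, hborel, .refl Y, continuous_id_of_le hle, hclosed, hopen⟩

/-- In a finer Polish topology on `X × X` for which `E` is clopen, the condition imposed on the
configurations of a scheme at level `n + 1` passes to the limit. -/
lemma exists_measurable_edges_iff [StandardBorelSpace X] (hE : Equivalence E)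
    (hBorel : MeasurableSet {p : X × X | E p.1 p.2}) (hns : ¬ Smooth E)
    (p q : ∀ n, Fin n → Bool) (c : ℕ → Prop) :
    ∃ φ : (ℕ → Bool) → X, Measurable φ ∧ ∀ n x y,
      word x (n + 1) = Fin.snoc (α := fun _ => Bool) (p n) false →
      word y (n + 1) = Fin.snoc (α := fun _ => Bool) (q n) true →
      (∀ i, n + 1 ≤ i → x i = y i) → (E (φ x) (φ y) ↔ c n) := by
  let := upgradeStandardBorel X
  obtain ⟨M, _, _, _, _, e, he, hclopen⟩ :=
    exists_continuous_measurableEquiv_isClopen_preimage hBorel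
  let := TopologicalSpace.upgradeIsCompletelyMetrizable M
  obtain ⟨𝒜, h𝒜, hjoin⟩ := exists_isScheme_subset_joined e.symm.measurable hE hBorel hns p q c
  obtain ⟨φ, hφ, hclosure⟩ := h𝒜.exists_measurable_mem_closure he
  refine ⟨φ, hφ, fun n x y hx hy hxy => ?_⟩
  have hclosed : IsClosed {m : M | E (e m).1 (e m).2 ↔ c n} := by
    by_cases h : c n <;> simp only [h, iff_true, iff_false]
    exacts [hclopen.1, hclopen.compl.1]
  have himage : (fun η => e.symm (η (word x (n + 1)), η (word y (n + 1)))) '' 𝒜 (n + 1) ⊆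
      {m : M | E (e m).1 (e m).2 ↔ c n} := by
    rintro _ ⟨η, hη, rfl⟩
    change E (e (e.symm _)).1 (e (e.symm _)).2 ↔ c n
    rw [e.apply_symm_apply, hx, hy]
    exact (hjoin n hη).2
  have hlimit : E (e (e.symm (φ x, φ y))).1 (e (e.symm (φ x, φ y))).2 ↔ c n :=
    closure_minimal himage hclosed (hclosure (n + 1) x y hxy)
  rwa [e.apply_symm_apply] at hlimit

end Schemes

section Glue

variable {α : Type*} {N L m : ℕ} {p q t z : ℕ → α}

/-- The sequence that follows `p` below `N` and `z` from `N` on. -/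
def glue (N : ℕ) (p z : ℕ → α) : ℕ → α := fun i => if i < N then p i else z i

lemma glue_of_lt {i : ℕ} (h : i < N) : glue N p z i = p i := if_pos h

lemma glue_of_le {i : ℕ} (h : N ≤ i) : glue N p z i = z i := if_neg h.not_gt

lemma glue_self : glue N p p = p := funext fun _ => ite_self _

lemma glue_congr (h : p ∈ cylinder q N) : glue N p z = glue N q z := by
  ext i
  by_cases hi : i < N
  · rw [glue_of_lt hi, glue_of_lt hi, h i hi]
  · rw [glue_of_le (not_lt.1 hi), glue_of_le (not_lt.1 hi)]

lemma glue_eq_of_mem_cylinder (h : z ∈ cylinder p N) : glue N p z = z := by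
  rw [← glue_congr h, glue_self]

lemma glue_mem_cylinder (h : m ≤ N) (hp : p ∈ cylinder q m) : glue N p z ∈ cylinder q m :=
  fun i hi => (glue_of_lt (hi.trans_le h)).trans (hp i hi)

lemma glue_glue : glue N p (glue N q z) = glue N p z := by
  ext i
  by_cases hi : i < N
  · rw [glue_of_lt hi, glue_of_lt hi]
  · rw [glue_of_le (not_lt.1 hi), glue_of_le (not_lt.1 hi), glue_of_le (not_lt.1 hi)]

lemma glue_glue_of_le (h : L ≤ N) : glue N (glue L p t) z = glue L p (glue N t z) := by
  ext i
  rcases lt_or_ge i L with hL | hL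
  · rw [glue_of_lt (hL.trans_le h), glue_of_lt hL, glue_of_lt hL]
  · rcases lt_or_ge i N with hN | hN
    · rw [glue_of_lt hN, glue_of_le hL, glue_of_le hL, glue_of_lt hN]
    · rw [glue_of_le hN, glue_of_le hL, glue_of_le hN]

lemma word_glue : word (glue N p z) N = word p N := funext fun i => glue_of_lt i.2

lemma word_glue_succ {b : α} : word (glue (N + 1) (glue N p fun _ => b) z) (N + 1) =
    Fin.snoc (α := fun _ => α) (word p N) b := by
  rw [word_glue, word_succ, word_glue, glue_of_le le_rfl]

variable [TopologicalSpace α]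

lemma eventually_cylinder_subset [DiscreteTopology α] {s : Set (ℕ → α)} (hs : s ∈ 𝓝 p) :
    ∀ᶠ n in atTop, cylinder p n ⊆ s := by
  obtain ⟨_, ⟨q, n, rfl⟩, hpq, hsub⟩ := (isTopologicalBasis_cylinders _).mem_nhds_iff.1 hs
  rw [← mem_cylinder_iff_eq.1 hpq] at hsub
  exact (eventually_ge_atTop n).mono fun k hk => (cylinder_anti p hk).trans hsub

lemma continuous_glue : Continuous (glue N p) :=
  continuous_pi fun i => by
    by_cases hi : i < N
    · simpa only [glue, hi, if_true] using continuous_const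
    · simpa only [glue, hi, if_false] using continuous_apply i

lemma isOpenMap_glue [DiscreteTopology α] : IsOpenMap (glue N p) := by
  refine IsOpenMap.of_nhds_le fun a s hs => ?_
  have hinv : Tendsto (glue N a) (𝓝 (glue N p a)) (𝓝 a) :=
    continuous_glue.tendsto' _ _ (glue_glue.trans glue_self)
  filter_upwards [hinv hs, (isOpen_cylinder _ _ N).mem_nhds (self_mem_cylinder (glue N p a) N)]
    with y hys hy
  have hyp : y ∈ cylinder p N := fun i hi => (hy i hi).trans (glue_of_lt hi)
  rw [mem_preimage, mem_preimage, glue_glue, glue_eq_of_mem_cylinder hyp] at hys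
  exact hys

end Glue

section DenselyJoins

lemma exists_seq_frequently_mem (α : Type*) [TopologicalSpace α] [TopologicalSpace.SeparableSpace α]
    [Nonempty α] :
    ∃ u : ℕ → α, ∀ U : Set α, IsOpen U → U.Nonempty → ∃ᶠ n in atTop, u n ∈ U := by
  refine ⟨fun n => TopologicalSpace.denseSeq α n.unpair.1, fun U hU hne => ?_⟩
  obtain ⟨k, hk⟩ := (TopologicalSpace.denseRange_denseSeq α).exists_mem_open hU hne
  exact frequently_atTop.2 fun a => ⟨Nat.pair k a, Nat.right_le_pair k a, by simpa using hk⟩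

/-- Any two basic open sets of Cantor space contain finite words of the same length such that `R`
holds between any two sequences that extend these words and agree beyond them. -/
def DenselyJoins (R : (ℕ → Bool) → (ℕ → Bool) → Prop) : Prop :=
  ∀ a b m, ∃ N ≥ m, ∃ p ∈ cylinder a m, ∃ q ∈ cylinder b m, ∀ z, R (glue N p z) (glue N q z)

lemma exists_measurable_denselyJoins {X : Type*} [MeasurableSpace X] [StandardBorelSpace X]
    {E : X → X → Prop} (hE : Equivalence E) (hBorel : MeasurableSet {p : X × X | E p.1 p.2})
    (hns : ¬ Smooth E) :
    ∃ φ : (ℕ → Bool) → X, Measurable φ ∧ DenselyJoins (E on φ) ∧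
      DenselyJoins fun x y => ¬ (E on φ) x y := by
  obtain ⟨u, hu⟩ := exists_seq_frequently_mem (Bool × (ℕ → Bool) × (ℕ → Bool))
  obtain ⟨φ, hφ, hedge⟩ := exists_measurable_edges_iff hE hBorel hns
    (fun n => word (u n).2.1 n) (fun n => word (u n).2.2 n) (fun n => (u n).1 = true)
  have hjoin (c : Bool) : DenselyJoins fun x y => E (φ x) (φ y) ↔ c = true := by
    intro a b m
    obtain ⟨n, hn, hc, ha, hb⟩ := frequently_atTop.1 (hu ({c} ×ˢ cylinder a m ×ˢ cylinder b m)
      ((isOpen_discrete _).prod ((isOpen_cylinder _ a m).prod (isOpen_cylinder _ b m)))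
      ⟨(c, a, b), rfl, self_mem_cylinder a m, self_mem_cylinder b m⟩) m
    refine ⟨n + 1, by omega, glue n (u n).2.1 fun _ => false, ?_,
      glue n (u n).2.2 fun _ => true, ?_, fun z => ?_⟩
    · exact glue_mem_cylinder hn ha
    · exact glue_mem_cylinder hn hb
    · rw [← mem_singleton_iff.1 hc]
      exact hedge n _ _ word_glue_succ word_glue_succ fun i hi => by
        rw [glue_of_le hi, glue_of_le hi]
  refine ⟨φ, hφ, by simpa using hjoin true, by simpa using hjoin false⟩

end DenselyJoins

section Meagre

/-- If `R` were comeagre in `U ×ˢ V`, then for a generic `(x, z)` with `z ∈ V` both `f x` and `g x`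
would be related to `z`. -/
lemma isMeagre_of_exists_isOpenMap_not {X : Type*} [TopologicalSpace X] [BaireSpace (X × X)]
    {R : X → X → Prop} (hR : BaireMeasurableSet {p : X × X | R p.1 p.2})
    (htrans : ∀ x y z, R x z → R y z → R x y)
    (h : ∀ U : Set X, IsOpen U → U.Nonempty → ∃ f g : X → X, Continuous f ∧ IsOpenMap f ∧
      Continuous g ∧ IsOpenMap g ∧ ∀ x, f x ∈ U ∧ g x ∈ U ∧ ¬ R (f x) (g x)) :
    IsMeagre {p : X × X | R p.1 p.2} := by
  obtain ⟨W, hW, hRW⟩ := hR.residualEq_isOpen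
  have hRW : ∀ᶠ p in residual (X × X), R p.1 p.2 ↔ p ∈ W := hRW.mem_iff
  rcases W.eq_empty_or_nonempty with rfl | ⟨⟨a, b⟩, hab⟩
  · exact hRW.mono fun p hp => hp.1
  · obtain ⟨U, V, hU, hV, haU, hbV, hUV⟩ := isOpen_prod_iff.1 hW a b hab
    obtain ⟨f, g, hf, hf_open, hg, hg_open, hfg⟩ := h U hU ⟨a, haU⟩
    have hpull {k : X → X} (hk : Continuous k) (hk_open : IsOpenMap k) :
        ∀ᶠ p : X × X in residual (X × X), R (k p.1) p.2 ↔ (k p.1, p.2) ∈ W :=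
      (tendsto_residual_of_isOpenMap (hk.prodMap continuous_id)
        (hk_open.prodMap .id)).eventually hRW
    obtain ⟨⟨x, z⟩, ⟨hfz, hgz⟩, -, hz⟩ := (dense_of_mem_residual
      ((hpull hf hf_open).and (hpull hg hg_open))).exists_mem_open (isOpen_univ.prod hV)
        ⟨(a, b), mem_univ a, hbV⟩
    have hxz : R (f x) z ∧ R (g x) z :=
      ⟨hfz.2 (hUV ⟨(hfg x).1, hz⟩), hgz.2 (hUV ⟨(hfg x).2.1, hz⟩)⟩
    exact ((hfg x).2.2 (htrans _ _ _ hxz.1 hxz.2)).elim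

lemma DenselyJoins.isMeagre {R : (ℕ → Bool) → (ℕ → Bool) → Prop} (hR : Equivalence R)
    (hmeas : MeasurableSet {p : (ℕ → Bool) × (ℕ → Bool) | R p.1 p.2})
    (h : DenselyJoins fun x y => ¬ R x y) :
    IsMeagre {p : (ℕ → Bool) × (ℕ → Bool) | R p.1 p.2} := by
  refine isMeagre_of_exists_isOpenMap_not hmeas.baireMeasurableSet
    (fun x y z hxz hyz => hR.trans hxz (hR.symm hyz)) fun U hU ⟨a, ha⟩ => ?_
  obtain ⟨m, hsub⟩ := (eventually_cylinder_subset (hU.mem_nhds ha)).exists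
  obtain ⟨N, hN, p, hp, q, hq, hpq⟩ := h a a m
  exact ⟨glue N p, glue N q, continuous_glue, isOpenMap_glue, continuous_glue, isOpenMap_glue,
    fun z => ⟨hsub (glue_mem_cylinder hN hp), hsub (glue_mem_cylinder hN hq), hpq z⟩⟩

end Meagre

section Fusion

variable {R : (ℕ → Bool) → (ℕ → Bool) → Prop}

lemma exists_antitone_isOpen_dense_iInter_subset {X : Type*} [TopologicalSpace X] [BaireSpace X]
    {S : Set X} (hS : S ∈ residual X) :
    ∃ D : ℕ → Set X, Antitone D ∧ (∀ n, IsOpen (D n)) ∧ (∀ n, Dense (D n)) ∧ ⋂ n, D n ⊆ S := by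
  obtain ⟨_, hS, hGδ, hdense⟩ := mem_residual.1 hS
  obtain ⟨f, hf, rfl⟩ := hGδ.eq_iInter_nat
  exact ⟨dissipate f, antitone_dissipate,
    fun n => (finite_Iic n).isOpen_biInter fun i _ => hf i,
    fun n => hdense.mono (iInter_subset_dissipate n), iInter_dissipate.trans_subset hS⟩

/-- The words of length `L` that begin the sequences in `F` are linked by `R` if `R` holds between
any two sequences that extend two of them and agree beyond. -/
def Linked (R : (ℕ → Bool) → (ℕ → Bool) → Prop) (L : ℕ) (F : Set (ℕ → Bool)) : Prop :=
  ∀ p ∈ F, ∀ q ∈ F, ∀ z, R (glue L p z) (glue L q z)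

lemma exists_cylinder_glue_mem {D : Set ((ℕ → Bool) × (ℕ → Bool))} (hD : IsOpen D)
    (hDd : Dense D) {F : Set (ℕ → Bool)} (hF : F.Finite) (L : ℕ) (a : ℕ → Bool) :
    ∃ M > L, ∃ r ∈ cylinder a L, ∃ s ∈ cylinder a L, ∀ p ∈ F, ∀ q ∈ F,
      ∀ x ∈ cylinder r M, ∀ y ∈ cylinder s M, (glue L p x, glue L q y) ∈ D := by
  let D' := ⋂ t ∈ F ×ˢ F, Prod.map (glue L t.1) (glue L t.2) ⁻¹' D
  have hpre (t : (ℕ → Bool) × (ℕ → Bool)) : IsOpen (Prod.map (glue L t.1) (glue L t.2) ⁻¹' D) :=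
    hD.preimage (continuous_glue.prodMap continuous_glue)
  have hD' : IsOpen D' := (hF.prod hF).isOpen_biInter fun t _ => hpre t
  have hD'd : Dense D' := dense_biInter_of_isOpen (fun t _ => hpre t) (hF.prod hF).countable
    fun t _ => hDd.preimage (isOpenMap_glue.prodMap isOpenMap_glue)
  obtain ⟨⟨r, s⟩, hrs, hr, hs⟩ := hD'd.exists_mem_open
    ((isOpen_cylinder _ a L).prod (isOpen_cylinder _ a L))
    ⟨(a, a), self_mem_cylinder a L, self_mem_cylinder a L⟩
  obtain ⟨U, hU, V, hV, hUV⟩ := mem_nhds_prod_iff.1 (hD'.mem_nhds hrs)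
  obtain ⟨M, hMU, hMV, hLM⟩ := ((eventually_cylinder_subset hU).and
    ((eventually_cylinder_subset hV).and (eventually_gt_atTop L))).exists
  refine ⟨M, hLM, r, hr, s, hs, fun p hp q hq x hx y hy => ?_⟩
  have hxy : (x, y) ∈ D' := hUV ⟨hMU hx, hMV hy⟩
  exact mem_iInter₂.1 hxy (p, q) ⟨hp, hq⟩

lemma DenselyJoins.exists_linked_extension (hR : Equivalence R) (h : DenselyJoins R)
    {D : Set ((ℕ → Bool) × (ℕ → Bool))} (hD : IsOpen D) (hDd : Dense D) {L : ℕ}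
    {F : Set (ℕ → Bool)} (hF : F.Finite) (hne : F.Nonempty) (hlinked : Linked R L F) :
    ∃ N > L, ∃ t : Bool → ℕ → Bool,
      Linked R N (image2 (fun p b => glue L p (t b)) F univ) ∧
      ∀ p ∈ F, ∀ q ∈ F, ∀ z w,
        (glue N (glue L p (t false)) z, glue N (glue L q (t true)) w) ∈ D := by
  obtain ⟨a, ha⟩ := hne
  obtain ⟨M, hLM, r, hr, s, hs, hrs⟩ := exists_cylinder_glue_mem hD hDd hF L a
  obtain ⟨N, hMN, u, hu, v, hv, huv⟩ := h r s M
  have hLN : L ≤ N := hLM.le.trans hMN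
  let t (b : Bool) : ℕ → Bool := bif b then v else u
  have hta (b : Bool) : t b ∈ cylinder a L := by
    cases b
    exacts [fun i hi => (hu i (hi.trans hLM)).trans (hr i hi),
      fun i hi => (hv i (hi.trans hLM)).trans (hs i hi)]
  have hpa (p) (hp : p ∈ F) (b) (z) : R (glue N (glue L p (t b)) z) (glue N (t b) z) := by
    have hglue := hlinked p hp a ha (glue N (t b) z)
    rwa [glue_eq_of_mem_cylinder (glue_mem_cylinder hLN (hta b)), ← glue_glue_of_le hLN] at hglue
  have htt (b c) (z) : R (glue N (t b) z) (glue N (t c) z) := by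
    cases b <;> cases c
    exacts [hR.refl _, huv z, hR.symm (huv z), hR.refl _]
  refine ⟨N, hLM.trans_le hMN, t, ?_, fun p hp q hq z w => ?_⟩
  · rintro _ ⟨p, hp, b, -, rfl⟩ _ ⟨q, hq, c, -, rfl⟩ z
    exact hR.trans (hpa p hp b z) (hR.trans (htt b c z) (hR.symm (hpa q hq c z)))
  · rw [glue_glue_of_le hLN, glue_glue_of_le hLN]
    exact hrs p hp q hq _ (glue_mem_cylinder hMN hu) _ (glue_mem_cylinder hMN hv)

/-- The `n`-th approximation to the point coded by `x`: the blocks `[L i, L (i + 1))` for `i < n`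
are filled in with `t i (x i)`. Only its values below `L n` are meaningful. -/
def blockApprox (L : ℕ → ℕ) (t : ℕ → Bool → ℕ → Bool) (x : ℕ → Bool) : ℕ → ℕ → Bool
  | 0 => fun _ => false
  | n + 1 => glue (L n) (blockApprox L t x n) (t n (x n))

/-- The point coded by `x`: the limit of the approximations `blockApprox L t x n`. -/
def blockLimit (L : ℕ → ℕ) (t : ℕ → Bool → ℕ → Bool) (x : ℕ → Bool) : ℕ → Bool :=
  fun i => blockApprox L t x (i + 1) i

variable {L : ℕ → ℕ} {t : ℕ → Bool → ℕ → Bool} {x y : ℕ → Bool}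

lemma blockApprox_mem_cylinder (hL : Monotone L) {m n : ℕ} (hmn : m ≤ n) :
    blockApprox L t x n ∈ cylinder (blockApprox L t x m) (L m) := by
  induction n, hmn using Nat.le_induction with
  | base => exact self_mem_cylinder _ _
  | succ n hmn ih => exact glue_mem_cylinder (hL hmn) ih

lemma blockLimit_mem_cylinder (hL : StrictMono L) (n : ℕ) :
    blockLimit L t x ∈ cylinder (blockApprox L t x n) (L n) := by
  intro i hi
  rcases le_total n (i + 1) with h | h
  · exact blockApprox_mem_cylinder hL.monotone h i hi
  · exact (blockApprox_mem_cylinder hL.monotone h i (hL.le_apply (x := i + 1))).symm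

lemma blockApprox_apply_eq {N n i : ℕ} (hxy : ∀ i, N ≤ i → x i = y i)
    (hn : N < n) (hi : L N ≤ i) : blockApprox L t x n i = blockApprox L t y n i := by
  induction n, hn using Nat.le_induction with
  | base => simp only [blockApprox, glue_of_le hi, hxy N le_rfl]
  | succ n hn ih => simp only [blockApprox, glue, ih, hxy n (Nat.le_of_succ_le hn)]

lemma glue_blockApprox_blockLimit {N : ℕ} (hL : StrictMono L) (hxy : ∀ i, N ≤ i → x i = y i) :
    glue (L N) (blockApprox L t x N) (blockLimit L t y) = blockLimit L t x := by
  ext i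
  rcases lt_or_ge i (L N) with hi | hi
  · rw [glue_of_lt hi, blockLimit_mem_cylinder hL N i hi]
  · rw [glue_of_le hi]
    exact (blockApprox_apply_eq hxy (Nat.lt_succ_of_le (hL.le_apply.trans hi)) hi).symm

lemma measurable_blockLimit : Measurable (blockLimit L t) := by
  have happrox (n i : ℕ) : Measurable fun x => blockApprox L t x n i := by
    induction n with
    | zero => exact measurable_const
    | succ n ih =>
      simp only [blockApprox, glue]
      split_ifs
      · exact ih
      · exact (measurable_of_finite fun b => t n b i).comp (measurable_pi_apply n)
  exact measurable_pi_lambda _ fun i => happrox (i + 1) i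

lemma DenselyJoins.exists_blocks (hR : Equivalence R) (h : DenselyJoins R)
    {D : ℕ → Set ((ℕ → Bool) × (ℕ → Bool))} (hD : ∀ n, IsOpen (D n)) (hDd : ∀ n, Dense (D n)) :
    ∃ (L : ℕ → ℕ) (t : ℕ → Bool → ℕ → Bool), StrictMono L ∧
      (∀ n, Linked R (L n) (range fun x => blockApprox L t x n)) ∧
      ∀ n x y, x n = false → y n = true → (blockLimit L t x, blockLimit L t y) ∈ D n := by
  let State := {s : ℕ × Set (ℕ → Bool) // s.2.Finite ∧ s.2.Nonempty ∧ Linked R s.1 s.2}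
  choose len hlen ext hlinked hmem using fun (n : ℕ) (s : State) =>
    h.exists_linked_extension hR (hD n) (hDd n) s.2.1 s.2.2.1 s.2.2.2
  let state (n : ℕ) : State := Nat.rec
    ⟨(0, {fun _ => false}), finite_singleton _, singleton_nonempty _, by
      rintro _ rfl _ rfl z
      exact hR.refl _⟩
    (fun n s => ⟨(len n s, image2 (fun p b => glue s.1.1 p (ext n s b)) s.1.2 univ),
      s.2.1.image2 _ finite_univ, s.2.2.1.image2 univ_nonempty, hlinked n s⟩) n
  let L (n : ℕ) : ℕ := (state n).1.1
  let t (n : ℕ) : Bool → ℕ → Bool := ext n (state n)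
  have hL : StrictMono L := strictMono_nat_of_lt_succ fun n => hlen n (state n)
  have happrox (n : ℕ) (x : ℕ → Bool) : blockApprox L t x n ∈ (state n).1.2 := by
    induction n with
    | zero => exact mem_singleton _
    | succ n ih => exact mem_image2_of_mem ih (mem_univ (x n))
  refine ⟨L, t, hL, fun n => ?_, fun n x y hx hy => ?_⟩
  · rintro _ ⟨x, rfl⟩ _ ⟨y, rfl⟩ z
    exact (state n).2.2.2 _ (happrox n x) _ (happrox n y) z
  · have hxy := hmem n (state n) _ (happrox n x) _ (happrox n y)
      (blockLimit L t x) (blockLimit L t y)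
    have hlimit (x : ℕ → Bool) :
        glue (L (n + 1)) (glue (L n) (blockApprox L t x n) (t n (x n))) (blockLimit L t x) =
          blockLimit L t x := glue_blockApprox_blockLimit hL fun _ _ => rfl
    rw [← hx, ← hy] at hxy
    rwa [hlimit x, hlimit y] at hxy

lemma DenselyJoins.borelReducible_E0 (hR : Equivalence R) (h : DenselyJoins R)
    (hmeagre : IsMeagre {p : (ℕ → Bool) × (ℕ → Bool) | R p.1 p.2}) : BorelReducible E0 R := by
  obtain ⟨D, hanti, hD, hDd, hDR⟩ := exists_antitone_isOpen_dense_iInter_subset hmeagre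
  obtain ⟨L, t, hL, hlinked, hmem⟩ := h.exists_blocks hR hD hDd
  have hnot {x y : ℕ → Bool} (hxy : ∃ᶠ n in atTop, x n = false ∧ y n = true) :
      ¬ R (blockLimit L t x) (blockLimit L t y) := by
    have hD_all : (blockLimit L t x, blockLimit L t y) ∈ ⋂ m, D m := mem_iInter.2 fun m =>
      let ⟨n, hmn, hx, hy⟩ := frequently_atTop.1 hxy m
      hanti hmn (hmem n x y hx hy)
    exact hDR hD_all
  refine ⟨blockLimit L t, measurable_blockLimit, fun x y => ⟨?_, fun hR' => ?_⟩⟩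
  · rintro ⟨N, hxy⟩
    have hlink := hlinked N _ ⟨x, rfl⟩ _ ⟨y, rfl⟩ (blockLimit L t x)
    rwa [glue_blockApprox_blockLimit hL fun _ _ => rfl,
      glue_blockApprox_blockLimit hL fun i hi => (hxy i hi).symm] at hlink
  · by_contra hE0
    have hne : ∃ᶠ n in atTop, x n ≠ y n := fun h => hE0 (by
      simpa only [E0, ne_eq, not_not, eventually_atTop] using h)
    have hcases : ∃ᶠ n in atTop, (x n = false ∧ y n = true) ∨ (y n = false ∧ x n = true) :=
      hne.mono fun n hn => by cases hx : x n <;> cases hy : y n <;> simp_all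
    rcases frequently_or_distrib.1 hcases with hxy | hyx
    · exact hnot hxy hR'
    · exact hnot hyx (hR.symm hR')

end Fusion

end GlimmEffros

theorem harrington_kechris_louveau_general {X : Type*} [MeasurableSpace X] [StandardBorelSpace X]
    {E : X → X → Prop} (hE : Equivalence E) (hBorel : MeasurableSet {p : X × X | E p.1 p.2}) :
    GlimmEffros.Smooth E ∨ GlimmEffros.BorelReducible E0 E := by
  refine or_iff_not_imp_left.2 fun hns => ?_
  obtain ⟨φ, hφ, hjoin, hnot_join⟩ := GlimmEffros.exists_measurable_denselyJoins hE hBorel hns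
  have hR : Equivalence (E on φ) := hE.comap φ
  have hR_meagre : IsMeagre {p : (ℕ → Bool) × (ℕ → Bool) | (E on φ) p.1 p.2} :=
    hnot_join.isMeagre hR ((hφ.prodMap hφ) hBorel)
  exact (hjoin.borelReducible_E0 hR hR_meagre).trans (.onFun hφ)

/-- The Harrington–Kechris–Louveau dichotomy: a Borel equivalence relation on a Polish space
is either smooth, or Borel-above `E₀`. -/
theorem harrington_kechris_louveau
    (X : Type) [TopologicalSpace X] [PolishSpace X] [MeasurableSpace X] [BorelSpace X]
    (E : X → X → Prop) (hE : Equivalence E)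
    (hBorel : MeasurableSet {p : X × X | E p.1 p.2}) :
    (∃ S : X → ℝ, Measurable S ∧ ∀ x₁ x₂ : X, E x₁ x₂ ↔ S x₁ = S x₂) ∨
    (∃ φ : (ℕ → Bool) → X, Measurable φ ∧ ∀ f g : ℕ → Bool, E0 f g ↔ E (φ f) (φ g)) :=
  harrington_kechris_louveau_general hE hBorel
end

section
/- E₀ is Borel reducible to =⁺, but =⁺ is not Borel reducible to E₀: there exists a Borel measurable φ : (ℕ → Bool) → (ℕ → ℝ) such that f E₀ g ↔ φ f =⁺ φ g for all f, g; and there is no Borel measurable ψ : (ℕ → ℝ) → (ℕ → Bool) such that x =⁺ y ↔ ψ x E₀ ψ y for all x, y. -/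
/-- The equivalence relation `=⁺` on `ℕ → ℝ`: two sequences are equivalent iff they
enumerate the same set of reals. -/
def EqPlus (x y : ℕ → ℝ) : Prop := Set.range x = Set.range y

/-!
Both halves go through the coordinatewise relation `E₀^ω` on sequences of points of Cantor space.
Enumerating `{(n, z) | z E₀ x n}` and coding pairs by reals reduces `E₀^ω` to `=⁺`; on constant
sequences this reduces `E₀` to `=⁺`.

Conversely, `E₀^ω` is not Borel reducible to any relation with countable classes. The classes of
`E₀` are the orbits of a countable group `H` and are dense, and those of `E₀^ω` are the orbits of
`ℕ → H`, a Polish group when `H` is discrete. If `ψ` were such a reduction, then `p ↦ ψ (p • x)`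
would have countable range, hence be generically constant on a cylinder fixing the coordinates of
`p` in a finite set `F`. Moving `p` in that cylinder makes `p • x` dense in the fibre of points
that agree with it on `F`, and `ψ` is continuous on a comeagre set, so `ψ` would be generically
constant on that fibre. But a generic point of the fibre is inequivalent to `p • x` at every
coordinate outside `F`.
-/

open Filter MeasureTheory Set Topology TopologicalSpace

section Category

variable {X Y Z : Type*} [TopologicalSpace X] [TopologicalSpace Y] [TopologicalSpace Z]

-- One direction of the Kuratowski–Ulam theorem.
theorem curry_residual_le_residual_prod [SecondCountableTopology Y] :
    (residual X).curry (residual Y) ≤ residual (X × Y) := by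
  refine le_countableGenerate_iff_of_countableInterFilter.2 ?_
  rintro W ⟨hWo, hWd⟩
  have hmeet : ∀ᵇ x : X, ∀ U ∈ countableBasis Y, ∃ y ∈ U, (x, y) ∈ W := by
    refine (eventually_countable_ball (countable_countableBasis Y)).2 fun U hU => ?_
    have hUo : IsOpen U := isOpen_of_mem_countableBasis hU
    have hproj : {x | ∃ y ∈ U, (x, y) ∈ W} = Prod.fst '' (univ ×ˢ U ∩ W) := by ext; simp
    refine residual_of_dense_open (hproj ▸ isOpenMap_fst _ ((isOpen_univ.prod hUo).inter hWo)) ?_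
    refine dense_iff_inter_open.2 fun V hVo hV => ?_
    obtain ⟨⟨x, y⟩, ⟨hx, hy⟩, hxy⟩ := hWd.inter_open_nonempty _ (hVo.prod hUo)
      (hV.prod (nonempty_of_mem_countableBasis hU))
    exact ⟨x, hx, y, hy, hxy⟩
  refine mem_curry_iff.2 (hmeet.mono fun x hx => residual_of_dense_open ?_ ?_)
  · exact hWo.preimage (Continuous.prodMk_right x)
  · exact (isBasis_countableBasis Y).dense_iff.2 fun U hU _ => hx U hU

theorem eventually_eventually_residual_of_isOpenMap [SecondCountableTopology Y] {f : X × Y → Z}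
    (hc : Continuous f) (ho : IsOpenMap f) {p : Z → Prop} (hp : ∀ᵇ z, p z) :
    ∀ᵇ x, ∀ᵇ y, p (f (x, y)) :=
  curry_residual_le_residual_prod (tendsto_residual_of_isOpenMap hc ho hp)

theorem exists_mem_residual_continuousOn [MeasurableSpace X] [BorelSpace X]
    [SecondCountableTopology Y] [MeasurableSpace Y] [OpensMeasurableSpace Y] {f : X → Y}
    (hf : Measurable f) : ∃ C ∈ residual X, ContinuousOn f C := by
  have hopen : ∀ U ∈ countableBasis Y, ∃ V, IsOpen V ∧ f ⁻¹' U =ᵇ V := fun U hU =>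
    (hf (isOpen_of_mem_countableBasis hU).measurableSet).residualEq_isOpen
  choose! V hVo hV using hopen
  refine ⟨{x | ∀ U ∈ countableBasis Y, x ∈ f ⁻¹' U ↔ x ∈ V U},
    (eventually_countable_ball (countable_countableBasis Y)).2 fun U hU => (hV U hU).mem_iff, ?_⟩
  refine continuousOn_iff_continuous_domRestrict.2
    ((isBasis_countableBasis Y).continuous_iff.2 fun U hU => ?_)
  convert (hVo U hU).preimage continuous_subtype_val using 1
  ext x
  exact x.2 U hU

theorem exists_isOpen_eventually_eq_const [BaireSpace X] [Nonempty X] [MeasurableSpace X]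
    [BorelSpace X] {α : Type*} [MeasurableSpace α] [MeasurableSingletonClass α] {f : X → α}
    (hf : Measurable f) (hcount : (range f).Countable) :
    ∃ c, ∃ V : Set X, IsOpen V ∧ V.Nonempty ∧ ∀ᵇ x, x ∈ V → f x = c := by
  have hcover : ¬ IsMeagre (⋃ c ∈ range f, f ⁻¹' {c}) := by
    rw [biUnion_preimage_singleton, preimage_range]
    exact not_isMeagre_of_isOpen isOpen_univ univ_nonempty
  obtain ⟨c, -, hc⟩ := exists_of_not_isMeagre_biUnion hcount hcover
  obtain ⟨V, hVo, hV⟩ := (hf (measurableSet_singleton c)).residualEq_isOpen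
  refine ⟨c, V, hVo, nonempty_iff_ne_empty.2 ?_, hV.mem_iff.mono fun x hx => hx.2⟩
  rintro rfl
  exact hc (hV.mem_iff.mono fun x hx => hx.not.2 (notMem_empty x))

end Category

section Piecewise

variable {ι : Type*} {Z : ι → Type*} [∀ i, TopologicalSpace (Z i)] [DecidableEq ι]

theorem continuous_finset_piecewise (F : Finset ι) :
    Continuous fun q : (∀ i, Z i) × (∀ i, Z i) => F.piecewise q.1 q.2 := by
  refine continuous_pi fun i => ?_
  by_cases hi : i ∈ F <;> simp only [Finset.piecewise, hi, if_true, if_false] <;> fun_prop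

theorem isOpenMap_finset_piecewise (F : Finset ι) :
    IsOpenMap fun q : (∀ i, Z i) × (∀ i, Z i) => F.piecewise q.1 q.2 := by
  refine IsOpenMap.of_sections fun ⟨a, b⟩ =>
    ⟨fun z => (F.piecewise z a, F.piecewise b z), ?_, ?_, fun z => ?_⟩
  · exact (((continuous_finset_piecewise F).comp (.prodMk_left a)).prodMk
      ((continuous_finset_piecewise F).comp (.prodMk_right b))).continuousAt
  · simp [Finset.piecewise_same]
  · simp [Finset.piecewise_same]

end Piecewise

@[to_additive]
theorem isOpenMap_smul_prod {G X : Type*} [Group G] [MulAction G X] [TopologicalSpace G]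
    [TopologicalSpace X] [ContinuousSMul G X] : IsOpenMap fun q : G × X => q.1 • q.2 :=
  IsOpenMap.of_sections fun ⟨g, x⟩ =>
    ⟨fun z => (g, g⁻¹ • z), by fun_prop, by simp, fun z => by simp⟩

section CoordinatewiseAction

@[to_additive]
theorem mem_orbit_pi_smul_iff {ι : Type*} {H Z : ι → Type*} [∀ i, Group (H i)]
    [∀ i, MulAction (H i) (Z i)] {x y : ∀ i, Z i} :
    x ∈ MulAction.orbit (∀ i, H i) y ↔ ∀ i, x i ∈ MulAction.orbit (H i) (y i) := by
  simp only [MulAction.mem_orbit_iff, Classical.skolem, funext_iff, Pi.smul_apply']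

variable {ι H Z : Type*} [Group H] [MulAction H Z] [TopologicalSpace Z]

@[to_additive]
theorem eventually_residual_notMem_orbit_smul [Countable H] [T1Space Z] [Uncountable Z]
    [MulAction.IsMinimal H Z] (z : Z) : ∀ᵇ w, w ∉ MulAction.orbit H z := by
  have hisol (w : Z) : ¬ IsOpen {w} := fun hw => by
    have huniv : MulAction.orbit H w = univ := eq_univ_of_forall fun v => by
      obtain ⟨g, hg⟩ := hw.exists_smul_mem H v (singleton_nonempty w)
      exact MulAction.mem_orbit_symm.1 ⟨g, hg⟩
    exact not_countable_univ (huniv ▸ countable_range (· • w) : (univ : Set Z).Countable)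
  have hne : ∀ v ∈ MulAction.orbit H z, ∀ᵇ w, w ≠ v := fun v _ =>
    residual_of_dense_open isOpen_compl_singleton (dense_compl_singleton_iff_not_open.2 (hisol v))
  refine ((eventually_countable_ball (countable_range fun g : H => g • z)).2 hne).mono ?_
  exact fun w hw hmem => hw w hmem rfl

@[to_additive]
theorem piecewise_mem_closure_image_smul [DecidableEq ι] [MulAction.IsMinimal H Z] (F : Finset ι)
    (p : ι → H) (x b : ι → Z) :
    F.piecewise (p • x) b ∈ closure ((· • x) '' {q : ι → H | ∀ i ∈ F, q i = p i}) := by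
  have himage : (· • x) '' {q : ι → H | ∀ i ∈ F, q i = p i} =
      univ.pi fun i => (· • x i) '' {g : H | i ∈ F → g = p i} := by
    ext z
    simp only [mem_image, mem_ofPred_eq, mem_univ_pi, Classical.skolem, forall_and, funext_iff,
      Pi.smul_apply']
  rw [himage, closure_pi_set, mem_univ_pi]
  intro i
  by_cases hi : i ∈ F
  · exact subset_closure ⟨p i, fun _ => rfl, by simp [hi]⟩
  · simpa [hi] using denseRange_smul H (x i) (b i)

@[to_additive]
theorem exists_eventually_residual_smul_mem_and_piecewise_smul_mem [TopologicalSpace H]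
    [SecondCountableTopology H] [ContinuousSMul H Z] [SecondCountableTopology Z]
    [BaireSpace (ι → Z)] [Nonempty Z] [Countable ι] [DecidableEq ι] {C : Set (ι → Z)}
    (hC : C ∈ residual (ι → Z)) :
    ∃ x : ι → Z, ∀ᵇ p : ι → H,
      p • x ∈ C ∧ ∀ F : Finset ι, ∀ᵇ b, F.piecewise (p • x) b ∈ C := by
  have hpiecewise : ∀ᵇ y : ι → Z, ∀ F : Finset ι, ∀ᵇ b, F.piecewise y b ∈ C :=
    eventually_countable_forall.2 fun F => eventually_eventually_residual_of_isOpenMap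
      (continuous_finset_piecewise F) (isOpenMap_finset_piecewise F) hC
  exact (dense_of_mem_residual <| eventually_eventually_residual_of_isOpenMap
    (f := fun q : (ι → Z) × (ι → H) => q.2 • q.1) (by fun_prop)
    (isOpenMap_smul_prod.comp (Homeomorph.prodComm _ _).isOpenMap)
    (Filter.Eventually.and hC hpiecewise)).nonempty

@[to_additive]
theorem exists_eventually_residual_piecewise_eq_of_countable_image_pi_smul [Countable H]
    [PolishSpace Z] [Nonempty Z] [MeasurableSpace Z] [BorelSpace Z] [ContinuousConstSMul H Z]
    [MulAction.IsMinimal H Z] [Countable ι] [DecidableEq ι] {Y : Type*} [TopologicalSpace Y]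
    [T1Space Y] [SecondCountableTopology Y] [MeasurableSpace Y] [OpensMeasurableSpace Y]
    {ψ : (ι → Z) → Y}
    (hψ : Measurable ψ) (horbit : ∀ x, (ψ '' MulAction.orbit (ι → H) x).Countable) :
    ∃ (x : ι → Z) (F : Finset ι), ∀ᵇ b, ψ (F.piecewise x b) = ψ x := by
  let : TopologicalSpace H := ⊥
  have : DiscreteTopology H := ⟨rfl⟩
  have : ContinuousSMul H Z := ⟨continuous_prod_of_discrete_left.2 continuous_const_smul⟩
  borelize (ι → H)
  obtain ⟨C, hC, hψC⟩ := exists_mem_residual_continuousOn hψ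
  obtain ⟨x, hx⟩ := exists_eventually_residual_smul_mem_and_piecewise_smul_mem (H := H) hC
  have hrange : (range fun p : ι → H => ψ (p • x)).Countable :=
    (range_comp ψ fun p : ι → H => p • x).symm ▸ horbit x
  obtain ⟨c, V, hVo, hV, hc⟩ := exists_isOpen_eventually_eq_const
    (hψ.comp (by fun_prop : Measurable fun p : ι → H => p • x)) hrange
  have hdense := dense_of_mem_residual (hx.and hc)
  obtain ⟨p, hpV, ⟨-, hpC⟩, hpc⟩ := hdense.inter_open_nonempty V hVo hV
  obtain ⟨F, u, hu, huV⟩ := isOpen_pi_iff.1 hVo p hpV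
  refine ⟨p • x, F, (hpC F).mono fun b hb => ?_⟩
  have hclosure : F.piecewise (p • x) b ∈ closure {y ∈ C | ψ y = c} := by
    refine mem_closure_iff.2 fun W hWo hbW => ?_
    obtain ⟨_, hqW, q, hq, rfl⟩ := mem_closure_iff.1
      (piecewise_mem_closure_image_smul F p x b) W hWo hbW
    have hqV : q ∈ V := huV fun i hi => (hq i hi).symm ▸ (hu i hi).2
    obtain ⟨r, ⟨hrV, hrW⟩, ⟨hrC, -⟩, hrc⟩ := hdense.inter_open_nonempty _
      (hVo.inter (hWo.preimage (by fun_prop : Continuous (· • x)))) ⟨q, hqV, hqW⟩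
    exact ⟨r • x, hrW, hrC, hrc hrV⟩
  have hψb : ψ (F.piecewise (p • x) b) ∈ closure {c} :=
    ((hψC _ hb).mono (sep_subset C _)).mem_closure hclosure fun y hy => hy.2
  rw [closure_singleton, mem_singleton_iff] at hψb
  exact hψb.trans (hpc hpV).symm

@[to_additive]
theorem not_exists_measurable_mem_orbit_pi_smul_iff [Countable H] [PolishSpace Z] [Uncountable Z]
    [MeasurableSpace Z] [BorelSpace Z] [ContinuousConstSMul H Z] [MulAction.IsMinimal H Z]
    [Infinite ι] [Countable ι] {Y : Type*} [TopologicalSpace Y] [T1Space Y]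
    [SecondCountableTopology Y] [MeasurableSpace Y] [OpensMeasurableSpace Y] {R : Y → Y → Prop}
    (hR : ∀ c, {d | R d c}.Countable) :
    ¬ ∃ ψ : (ι → Z) → Y, Measurable ψ ∧
      ∀ x y, x ∈ MulAction.orbit (ι → H) y ↔ R (ψ x) (ψ y) := by
  classical
  rintro ⟨ψ, hψ, hred⟩
  have horbit (x : ι → Z) : (ψ '' MulAction.orbit (ι → H) x).Countable := by
    refine (hR (ψ x)).mono ?_
    rintro _ ⟨y, hy, rfl⟩
    exact (hred y x).1 hy
  obtain ⟨x, F, hx⟩ := exists_eventually_residual_piecewise_eq_of_countable_image_pi_smul hψ horbit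
  obtain ⟨i, hi⟩ := Infinite.exists_notMem_finset F
  have hxi : ∀ᵇ b : ι → Z, b i ∉ MulAction.orbit H (x i) :=
    (tendsto_residual_of_isOpenMap (continuous_apply (A := fun _ : ι => Z) i)
      (isOpenMap_eval i)).eventually (eventually_residual_notMem_orbit_smul (x i))
  obtain ⟨b, hb, hbi⟩ := (dense_of_mem_residual (hx.and hxi)).nonempty
  have hmem : F.piecewise x b ∈ MulAction.orbit (ι → H) x :=
    (hred _ _).2 (hb ▸ (hred x x).1 (MulAction.mem_orbit_self x))
  exact hbi (by simpa [hi] using mem_orbit_pi_smul_iff.1 hmem i)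

end CoordinatewiseAction

theorem exists_measurable_eqPlus_iff_range_eq {ι X W : Type*} [Countable ι] [Nonempty ι]
    [MeasurableSpace X] [MeasurableSpace W] [StandardBorelSpace W] {g : ι → X → W}
    (hg : ∀ i, Measurable (g i)) :
    ∃ φ : X → ℕ → ℝ, Measurable φ ∧
      ∀ x y, EqPlus (φ x) (φ y) ↔ range (g · x) = range (g · y) := by
  obtain ⟨e, he⟩ := exists_surjective_nat ι
  have hemb := measurableEmbedding_embeddingReal W
  refine ⟨fun x n => embeddingReal W (g (e n) x),
    measurable_pi_iff.2 fun n => hemb.measurable.comp (hg (e n)), fun x y => ?_⟩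
  have hrange (z : X) : range (fun n => embeddingReal W (g (e n) z)) =
      embeddingReal W '' range (g · z) := by
    rw [← range_comp, ← he.range_comp]
    rfl
  rw [EqPlus, hrange, hrange, hemb.injective.image_injective.eq_iff]

@[to_additive]
theorem exists_measurable_eqPlus_iff_mem_orbit_pi_smul {H Z : Type*} [Group H] [Countable H]
    [MulAction H Z] [MeasurableSpace Z] [StandardBorelSpace Z] [MeasurableConstSMul H Z] :
    ∃ φ : (ℕ → Z) → ℕ → ℝ, Measurable φ ∧
      ∀ x y, EqPlus (φ x) (φ y) ↔ x ∈ MulAction.orbit (ℕ → H) y := by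
  obtain ⟨φ, hφ, h⟩ := exists_measurable_eqPlus_iff_range_eq
    (g := fun (i : ℕ × H) (x : ℕ → Z) => (i.1, i.2 • x i.1)) fun i =>
      measurable_const.prodMk ((measurable_pi_apply i.1).const_smul i.2)
  have hrange (x : ℕ → Z) :
      range (fun i : ℕ × H => (i.1, i.2 • x i.1)) = {w | w.2 ∈ MulAction.orbit H (x w.1)} := by
    ext ⟨n, z⟩
    simp [MulAction.mem_orbit_iff]
  refine ⟨φ, hφ, fun x y => ?_⟩
  rw [h, hrange, hrange, mem_orbit_pi_smul_iff]
  constructor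
  · intro hxy n
    exact (Set.ext_iff.1 hxy (n, x n)).1 (MulAction.mem_orbit_self (x n))
  · intro hxy
    ext ⟨n, z⟩
    simp only [mem_ofPred_eq, MulAction.orbit_eq_iff.2 (hxy n)]

theorem E0_iff_eventuallyEq {f g : ℕ → Bool} : E0 f g ↔ f =ᶠ[atTop] g :=
  eventually_atTop.symm

/-- The group of finitely supported points of Cantor space, under coordinatewise exclusive or
(the addition of `Bool`). It is countable, and the orbits of its translation action are the
`E₀`-classes. -/
def eventuallyZero : AddSubgroup (ℕ → Bool) where
  carrier := {f | f =ᶠ[atTop] 0}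
  zero_mem' := EventuallyEq.rfl
  add_mem' hf hg := by simpa using hf.add hg
  neg_mem' hf := by simpa using hf.neg

theorem mem_orbit_eventuallyZero_iff {f g : ℕ → Bool} :
    f ∈ AddAction.orbit eventuallyZero g ↔ E0 f g := by
  rw [← AddAction.orbitRel_apply]
  change QuotientAddGroup.rightRel eventuallyZero f g ↔ _
  rw [QuotientAddGroup.rightRel_apply, ← sub_eq_add_neg, ← neg_mem_iff, neg_sub,
    E0_iff_eventuallyEq, eventuallyEq_iff_sub]
  rfl

instance eventuallyZero.instCountable : Countable eventuallyZero := by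
  refine ((countable_range fun s : Finset ℕ => fun n => decide (n ∈ s)).mono ?_).to_subtype
  intro f hf
  obtain ⟨N, hN⟩ := eventually_atTop.1 hf
  refine ⟨{n ∈ Finset.range N | f n}, funext fun n => ?_⟩
  rcases lt_or_ge n N with hn | hn
  · simp [hn]
  · have hfn : f n = false := hN n hn
    simp [hfn]

instance eventuallyZero.instIsMinimal : AddAction.IsMinimal eventuallyZero (ℕ → Bool) where
  dense_orbit f g := by
    have hlim : Tendsto (fun N => (Finset.range N).piecewise g f) atTop (𝓝 g) := by
      refine tendsto_pi_nhds.2 fun n => tendsto_const_nhds.congr' ?_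
      filter_upwards [eventually_gt_atTop n] with N hN
      simp [hN]
    exact mem_closure_of_tendsto hlim <| .of_forall fun N =>
      mem_orbit_eventuallyZero_iff.2 ⟨N, fun n hn => by simp [hn]⟩

theorem countable_setOf_E0 (g : ℕ → Bool) : {f | E0 f g}.Countable := by
  have horbit : {f | E0 f g} = AddAction.orbit eventuallyZero g :=
    ext fun _ => mem_orbit_eventuallyZero_iff.symm
  exact horbit ▸ countable_range fun h : eventuallyZero => h +ᵥ g

theorem not_exists_measurable_eqPlus_iff {Y : Type*} [TopologicalSpace Y] [T1Space Y]
    [SecondCountableTopology Y] [MeasurableSpace Y] [OpensMeasurableSpace Y] {R : Y → Y → Prop}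
    (hR : ∀ c, {d | R d c}.Countable) :
    ¬ ∃ ψ : (ℕ → ℝ) → Y, Measurable ψ ∧ ∀ x y, EqPlus x y ↔ R (ψ x) (ψ y) := by
  have : PolishSpace (ℕ → Bool) := {}
  have : Uncountable (ℕ → Bool) :=
    Cardinal.aleph0_lt_mk_iff.1 (by simpa using Cardinal.aleph0_lt_continuum)
  rintro ⟨ψ, hψ, hψR⟩
  obtain ⟨φ, hφ, hφE⟩ := exists_measurable_eqPlus_iff_mem_orbit_pi_vadd (H := eventuallyZero)
    (Z := ℕ → Bool)
  exact not_exists_measurable_mem_orbit_pi_vadd_iff (H := eventuallyZero) hR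
    ⟨ψ ∘ φ, hψ.comp hφ, fun x y => (hφE x y).symm.trans (hψR (φ x) (φ y))⟩

/-- `E₀` is Borel reducible to `=⁺`, but `=⁺` is not Borel reducible to `E₀`. -/
theorem E0_reducible_to_eqPlus_not_conversely :
    (∃ φ : (ℕ → Bool) → (ℕ → ℝ), Measurable φ ∧
      ∀ f g : ℕ → Bool, E0 f g ↔ EqPlus (φ f) (φ g)) ∧
    ¬ ∃ ψ : (ℕ → ℝ) → (ℕ → Bool), Measurable ψ ∧
      ∀ x y : ℕ → ℝ, EqPlus x y ↔ E0 (ψ x) (ψ y) := by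
  refine ⟨?_, not_exists_measurable_eqPlus_iff countable_setOf_E0⟩
  obtain ⟨φ, hφ, hφE⟩ := exists_measurable_eqPlus_iff_mem_orbit_pi_vadd (H := eventuallyZero)
    (Z := ℕ → Bool)
  refine ⟨fun f => φ fun _ => f, hφ.comp (by fun_prop), fun f g => ?_⟩
  simp [hφE, mem_orbit_pi_vadd_iff, mem_orbit_eventuallyZero_iff]
end

section
/- Dougherty–Jackson–Kechris maximality of E(F₂, 2^ℕ): let F₂ = FreeGroup (Fin 2), let Z = F₂ → (ℕ → Bool) with the product topology (a Polish space), and let E∞ be the orbit equivalence relation of the shift action of F₂ on Z, where (γ · x)(δ) = x(γ⁻¹ * δ). Then for every Polish space Y and every equivalence relation F on Y that is Borel as a subset of Y × Y and has all classes countable, F is Borel reducible to E∞: there is a Borel measurable φ : Y → Z with y₁ F y₂ ↔ (∃ γ ∈ F₂, γ · φ y₁ = φ y₂) for all y₁, y₂. -/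
/-- The shift action of the free group `F₂` on `F₂ → (ℕ → Bool)`:
`(γ · x)(δ) = x (γ⁻¹ * δ)`. -/
def ShiftAct (γ : FreeGroup (Fin 2)) (x : FreeGroup (Fin 2) → (ℕ → Bool)) :
    FreeGroup (Fin 2) → (ℕ → Bool) :=
  fun δ => x (γ⁻¹ * δ)

/-!
By the Lusin–Novikov theorem the pairs `(x, y) ∈ F` can be labelled by natural numbers in a Borel
way so that a label together with either coordinate determines the pair. On `Y × ℤ` let one
generator of `F₂` translate the integer coordinate by one, and let the other exchange `(x, n)` with
`(y, -n - 1)` whenever `(x, y) ∈ F` has label `n`. For this Borel action, points `(x, 0)` and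
`(y, 0)` share an orbit iff `x F y`. Sending `w` to `δ ↦ c (δ⁻¹ · w)`, where `c` is a Borel
injection of `Y × ℤ` into `ℕ → Bool`, carries any Borel action into the shift.

For Lusin–Novikov, call a set small if it is a countable union of Borel sets on each of which the
map `π` is injective. Choose a small `D` such that, for finitely many basic open sets `U i`, if the
images `π '' (U i \ D)` have a common point then so do the `π '' (U i \ D')` for every small `D'`.
Then `π` is not injective on the part of any `U i \ D` lying over the common image, so each `U i`
can be split into two disjoint pieces of small diameter without emptying the common image. If `D` is
not everything, a sufficiently generic sequence of splittings contracts to a nonempty perfect set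
inside one fibre, which is therefore uncountable.
-/

open Set Filter Function Topology MeasureTheory MeasurableSpace
open scoped ENNReal

section AnalyticSeparation

variable {C X : Type*} [TopologicalSpace C] [PolishSpace C] [TopologicalSpace X]

theorem analyticSet_inter [T2Space X] {s t : Set X} (hs : AnalyticSet s) (ht : AnalyticSet t) :
    AnalyticSet (s ∩ t) := by
  rw [inter_eq_iInter]
  exact AnalyticSet.iInter (Bool.forall_bool.2 ⟨ht, hs⟩)

variable [MeasurableSpace C] [BorelSpace C]

theorem exists_measurableSet_superset_disjoint_prod [PolishSpace X] [MeasurableSpace X]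
    [BorelSpace X] {R : Set (C × X)} (hR : AnalyticSet R) {s : Set C} {t : Set X}
    (hs : AnalyticSet s) (ht : AnalyticSet t) (hst : Disjoint (s ×ˢ t) R) :
    ∃ s' t', s ⊆ s' ∧ t ⊆ t' ∧ MeasurableSet s' ∧ MeasurableSet t' ∧ Disjoint (s' ×ˢ t') R := by
  have image_fst {v : Set X} (hv : AnalyticSet v) :
      AnalyticSet (Prod.fst '' (R ∩ Prod.snd ⁻¹' v)) :=
    (analyticSet_inter hR (hv.preimage continuous_snd)).image_of_continuous continuous_fst
  have image_snd {u : Set C} (hu : AnalyticSet u) :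
      AnalyticSet (Prod.snd '' (R ∩ Prod.fst ⁻¹' u)) :=
    (analyticSet_inter hR (hu.preimage continuous_fst)).image_of_continuous continuous_snd
  rw [Set.disjoint_left] at hst
  obtain ⟨s', hss', hs'R, hs'⟩ := hs.measurablySeparable (image_fst ht) <| by
    rw [Set.disjoint_left]
    rintro _ hx ⟨⟨x, y⟩, ⟨hxy, hy⟩, rfl⟩
    exact hst ⟨hx, hy⟩ hxy
  obtain ⟨t', htt', ht'R, ht'⟩ := ht.measurablySeparable (image_snd hs'.analyticSet) <| by
    rw [Set.disjoint_left]
    rintro _ hy ⟨⟨x, y⟩, ⟨hxy, hx⟩, rfl⟩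
    exact Set.disjoint_left.1 hs'R ⟨(x, y), ⟨hxy, hy⟩, rfl⟩ hx
  refine ⟨s', t', hss', htt', hs', ht', Set.disjoint_left.2 ?_⟩
  rintro ⟨x, y⟩ ⟨hx, hy⟩ hxy
  exact Set.disjoint_left.1 ht'R ⟨(x, y), ⟨hxy, hx⟩, rfl⟩ hy

theorem exists_measurableSet_superset_injOn [T2Space X] {π : C → X} (hπ : Continuous π) {s : Set C}
    (hs : AnalyticSet s) (hinj : InjOn π s) : ∃ t, s ⊆ t ∧ MeasurableSet t ∧ InjOn π t := by
  let R : Set (C × C) := {p | p.1 ≠ p.2 ∧ π p.1 = π p.2}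
  have hR : MeasurableSet R :=
    (isOpen_ne_fun continuous_fst continuous_snd).measurableSet.inter
      (isClosed_eq (hπ.comp continuous_fst) (hπ.comp continuous_snd)).measurableSet
  obtain ⟨t, t', hst, hst', ht, ht', hdisj⟩ :=
    exists_measurableSet_superset_disjoint_prod hR.analyticSet hs hs <| by
      rw [Set.disjoint_left]
      rintro ⟨x, y⟩ ⟨hx, hy⟩ ⟨hne, hxy⟩
      exact hne (hinj hx hy hxy)
  refine ⟨t ∩ t', subset_inter hst hst', ht.inter ht', fun x hx y hy hxy => ?_⟩
  by_contra hne
  exact Set.disjoint_left.1 hdisj (mk_mem_prod hx.1 hy.2) ⟨hne, hxy⟩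

end AnalyticSeparation

/-- `D` is a countable union of measurable sets on each of which `π` is injective. For fixed `π`
these sets form the σ-ideal (of measurable sets) used in the proof of the Lusin–Novikov theorem. -/
def IsSigmaInjOn {C X : Type*} [MeasurableSpace C] (π : C → X) (D : Set C) : Prop :=
  ∃ 𝓑 : Set (Set C), 𝓑.Countable ∧ (∀ B ∈ 𝓑, MeasurableSet B ∧ InjOn π B) ∧ ⋃₀ 𝓑 = D

namespace IsSigmaInjOn

variable {C X : Type*} [MeasurableSpace C] {π : C → X} {D E : Set C}

theorem of_injOn (hD : MeasurableSet D) (hinj : InjOn π D) : IsSigmaInjOn π D :=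
  ⟨{D}, countable_singleton D, forall_eq.2 ⟨hD, hinj⟩, sUnion_singleton D⟩

theorem iUnion {ι : Type*} [Countable ι] {D : ι → Set C} (hD : ∀ i, IsSigmaInjOn π (D i)) :
    IsSigmaInjOn π (⋃ i, D i) := by
  choose 𝓑 hcount h𝓑 hU using hD
  refine ⟨⋃ i, 𝓑 i, countable_iUnion hcount, fun B hB => ?_, ?_⟩
  · obtain ⟨i, hi⟩ := mem_iUnion.1 hB
    exact h𝓑 i B hi
  · rw [sUnion_iUnion]
    exact iUnion_congr hU

theorem union (hD : IsSigmaInjOn π D) (hE : IsSigmaInjOn π E) : IsSigmaInjOn π (D ∪ E) := by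
  rw [union_eq_iUnion]
  exact iUnion (Bool.forall_bool.2 ⟨hE, hD⟩)

theorem measurableSet (hD : IsSigmaInjOn π D) : MeasurableSet D := by
  obtain ⟨𝓑, hcount, h𝓑, rfl⟩ := hD
  exact MeasurableSet.sUnion hcount fun B hB => (h𝓑 B hB).1

theorem exists_measurable_nat (h : IsSigmaInjOn π univ) :
    ∃ n : C → ℕ, Measurable n ∧ Injective fun c => (π c, n c) := by
  obtain ⟨B, hB, hU⟩ := (exists_seq_cover_iff_countable ⟨∅, .empty, injOn_empty π⟩).2 h
  have hcover (c : C) : ∃ i, c ∈ B i := mem_iUnion.1 (hU ▸ mem_univ c)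
  classical
  refine ⟨fun c => Nat.find (hcover c), measurable_find hcover fun i => (hB i).1, fun c d hcd => ?_⟩
  obtain ⟨hπ, hn : Nat.find (hcover c) = Nat.find (hcover d)⟩ := Prod.mk.inj hcd
  exact (hB _).2 (Nat.find_spec (hcover c)) (hn ▸ Nat.find_spec (hcover d)) hπ

end IsSigmaInjOn

section CommonImage

variable {C X ι : Type*}

/-- The points of `X` whose fibre under `π` meets `U i` outside `D` for every `i ∈ S`. -/
def commonImage (π : C → X) (U : ι → Set C) (D : Set C) (S : Finset ι) : Set X :=
  ⋂ i ∈ S, π '' (U i \ D)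

variable {π : C → X} {U : ι → Set C} {D D' : Set C} {S : Finset ι} {i : ι}

theorem commonImage_anti_left (h : D ⊆ D') (S : Finset ι) :
    commonImage π U D' S ⊆ commonImage π U D S :=
  iInter₂_mono fun _ _ => image_mono (sdiff_subset_sdiff_right h)

theorem commonImage_insert [DecidableEq ι] :
    commonImage π U D (insert i S) = π '' (U i \ D) ∩ commonImage π U D S :=
  Finset.set_biInter_insert i S _

theorem commonImage_subset (hi : i ∈ S) : commonImage π U D S ⊆ π '' (U i \ D) :=
  biInter_subset_of_mem hi

theorem exists_isSigmaInjOn_forall_commonImage_nonempty [MeasurableSpace C] [Countable ι]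
    (π : C → X) (U : ι → Set C) :
    ∃ D, IsSigmaInjOn π D ∧ ∀ S : Finset ι, (commonImage π U D S).Nonempty →
      ∀ D', IsSigmaInjOn π D' → (commonImage π U D' S).Nonempty := by
  have exists_stable (S : Finset ι) : ∃ D, IsSigmaInjOn π D ∧ ((commonImage π U D S).Nonempty →
      ∀ D', IsSigmaInjOn π D' → (commonImage π U D' S).Nonempty) := by
    by_contra! h
    obtain ⟨-, D, hD, hempty⟩ := h ∅ (.of_injOn .empty (injOn_empty π))
    exact (h D hD).1.ne_empty hempty
  choose D hD hstable using exists_stable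
  exact ⟨⋃ S, D S, .iUnion hD, fun S hne =>
    hstable S (hne.mono (commonImage_anti_left (subset_iUnion D S) S))⟩

variable [TopologicalSpace C] [PolishSpace C] [MeasurableSpace C] [BorelSpace C]
  [TopologicalSpace X] [T2Space X]

theorem analyticSet_commonImage (hπ : Continuous π) (hU : ∀ i, IsOpen (U i))
    (hD : MeasurableSet D) (hS : S.Nonempty) : AnalyticSet (commonImage π U D S) := by
  have := hS.to_subtype
  rw [commonImage, ← Finset.set_biInter_coe, biInter_eq_iInter]
  exact AnalyticSet.iInter fun i =>
    ((hU i).measurableSet.diff hD).analyticSet.image_of_continuous hπ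

theorem not_injOn_inter_preimage_commonImage (hπ : Continuous π) (hU : ∀ i, IsOpen (U i))
    (hD : IsSigmaInjOn π D)
    (hne : ∀ D', IsSigmaInjOn π D' → (commonImage π U D' S).Nonempty) (hi : i ∈ S) :
    ¬ InjOn π ((U i \ D) ∩ π ⁻¹' commonImage π U D S) := by
  intro hinj
  have hanalytic := analyticSet_inter
    ((hU i).measurableSet.diff hD.measurableSet).analyticSet
    ((analyticSet_commonImage hπ hU hD.measurableSet ⟨i, hi⟩).preimage hπ)
  obtain ⟨B, hsub, hBmeas, hBinj⟩ := exists_measurableSet_superset_injOn hπ hanalytic hinj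
  obtain ⟨x, hx⟩ := hne (D ∪ B) (hD.union (.of_injOn hBmeas hBinj))
  obtain ⟨c, ⟨hcU, hcDB⟩, rfl⟩ := commonImage_subset hi hx
  rw [mem_union, not_or] at hcDB
  exact hcDB.2 (hsub ⟨⟨hcU, hcDB.1⟩, commonImage_anti_left subset_union_left S hx⟩)

end CommonImage

/-- A form of the Rasiowa–Sikorski lemma for conditions that are finite sets: `𝓖` is the union of a
generic filter of conditions in `P`. -/
theorem exists_generic_set {α κ : Type*} [Countable α] [Countable κ] {P : Set (Finset α)}
    (T : κ → α → Set (Finset α))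
    (hT : ∀ S ∈ P, ∀ a ∈ S, ∀ k, ∃ V ∈ T k a, ∃ S' ∈ P, S ⊆ S' ∧ V ⊆ S')
    {S₀ : Finset α} (hS₀ : S₀ ∈ P) :
    ∃ 𝓖 : Set α, ↑S₀ ⊆ 𝓖 ∧ (∀ a ∈ 𝓖, ∀ b ∈ 𝓖, ∃ S ∈ P, a ∈ S ∧ b ∈ S) ∧
      ∀ a ∈ 𝓖, ∀ k, ∃ V ∈ T k a, ↑V ⊆ 𝓖 := by
  let := Encodable.ofCountable (κ × α)
  -- Either a solution of the task `(k, a)` has been added, or `a` has been excluded for good.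
  let 𝒟 (q : κ × α) : Order.Cofinal P :=
    { carrier := {S | (∃ V ∈ T q.1 q.2, V ⊆ S.1) ∨ ∀ S' : P, S ≤ S' → q.2 ∉ S'.1}
      isCofinal := fun S => by
        by_cases h : ∃ S' : P, S ≤ S' ∧ q.2 ∈ S'.1
        · obtain ⟨S', hSS', hq⟩ := h
          obtain ⟨V, hV, S'', hS'', hle, hVS''⟩ := hT S' S'.2 q.2 hq q.1
          exact ⟨⟨S'', hS''⟩, .inl ⟨V, hV, hVS''⟩, hSS'.trans hle⟩
        · push Not at h
          exact ⟨S, .inr h, le_rfl⟩ }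
  let J := Order.idealOfCofinals (⟨S₀, hS₀⟩ : P) 𝒟
  refine ⟨{a | ∃ S ∈ J, a ∈ S.1}, fun a ha => ⟨_, Order.mem_idealOfCofinals _ 𝒟, ha⟩, ?_, ?_⟩
  · rintro a ⟨S, hS, ha⟩ b ⟨S', hS', hb⟩
    obtain ⟨S'', -, hle, hle'⟩ := J.directed S hS S' hS'
    exact ⟨S'', S''.2, hle ha, hle' hb⟩
  · rintro a ⟨S, hS, ha⟩ k
    obtain ⟨S', hS' | hS', hJ⟩ := Order.cofinal_meets_idealOfCofinals (⟨S₀, hS₀⟩ : P) 𝒟 (k, a)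
    · obtain ⟨V, hV, hVS'⟩ := hS'
      exact ⟨V, hV, fun b hb => ⟨S', hJ, hVS' hb⟩⟩
    · obtain ⟨S'', -, hle, hle'⟩ := J.directed S hS S' hJ
      exact (hS' S'' hle' (hle ha)).elim

section LimitSet

variable {C : Type*}

/-- The points to which a family of sets contracts: every neighbourhood of the point contains a
member of the family. -/
def limitSet [TopologicalSpace C] (𝓖 : Set (Set C)) : Set C :=
  {c | ∀ s ∈ 𝓝 c, ∃ u ∈ 𝓖, u ⊆ s}

theorem isClosed_limitSet [TopologicalSpace C] (𝓖 : Set (Set C)) : IsClosed (limitSet 𝓖) := by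
  refine isClosed_of_closure_subset fun c hc s hs => ?_
  obtain ⟨d, hd, hdlim⟩ := mem_closure_iff_nhds.1 hc (interior s) (interior_mem_nhds.2 hs)
  exact hdlim s (mem_interior_iff_mem_nhds.1 hd)

theorem preperfect_limitSet [TopologicalSpace C] {𝓖 : Set (Set C)}
    (hlim : ∀ u ∈ 𝓖, (u ∩ limitSet 𝓖).Nonempty)
    (hsplit : ∀ u ∈ 𝓖, ∃ v ∈ 𝓖, ∃ w ∈ 𝓖, Disjoint v w ∧ v ⊆ u ∧ w ⊆ u) :
    Preperfect (limitSet 𝓖) := by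
  refine preperfect_iff_nhds.2 fun c hc s hs => ?_
  obtain ⟨u, hu, hus⟩ := hc s hs
  obtain ⟨v, hv, w, hw, hvw, hvu, hwu⟩ := hsplit u hu
  obtain ⟨a, hav, ha⟩ := hlim v hv
  obtain ⟨b, hbw, hb⟩ := hlim w hw
  by_cases hac : a = c
  · exact ⟨b, ⟨hus (hwu hbw), hb⟩, fun hbc => hvw.ne_of_mem hav hbw (hac.trans hbc.symm)⟩
  · exact ⟨a, ⟨hus (hvu hav), ha⟩, hac⟩

theorem eq_of_mem_limitSet {X : Type*} [TopologicalSpace C] [TopologicalSpace X] [T2Space X]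
    {π : C → X} (hπ : Continuous π) {𝓖 : Set (Set C)}
    (hpair : ∀ u ∈ 𝓖, ∀ v ∈ 𝓖, (π '' u ∩ π '' v).Nonempty) {c d : C} (hc : c ∈ limitSet 𝓖)
    (hd : d ∈ limitSet 𝓖) : π c = π d := by
  by_contra hne
  obtain ⟨s, t, hs, ht, hcs, hdt, hst⟩ := t2_separation hne
  obtain ⟨u, hu, hus⟩ := hc _ (hπ.continuousAt.preimage_mem_nhds (hs.mem_nhds hcs))
  obtain ⟨v, hv, hvt⟩ := hd _ (hπ.continuousAt.preimage_mem_nhds (ht.mem_nhds hdt))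
  obtain ⟨x, hxu, hxv⟩ := hpair u hu v hv
  exact Set.disjoint_left.1 hst (image_subset_iff.2 hus hxu) (image_subset_iff.2 hvt hxv)

/-- `v` refines `u` to scale `1 / n`: the closure of `v` lies in `u`, and `v` has diameter at most
`1 / n` (no restriction when `n = 0`). -/
def IsFineRefinement [PseudoEMetricSpace C] (n : ℕ) (u v : Set C) : Prop :=
  closure v ⊆ u ∧ Metric.ediam v ≤ (n : ℝ≥0∞)⁻¹

theorem exists_mem_limitSet_of_antitone [PseudoEMetricSpace C] [CompleteSpace C] {𝓖 : Set (Set C)}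
    {s : ℕ → Set C} (hs : ∀ n, s n ∈ 𝓖) (hne : ∀ n, (s n).Nonempty) (hanti : Antitone s)
    (hdiam : Tendsto (fun n => Metric.ediam (s n)) atTop (𝓝 0)) :
    ∃ c ∈ limitSet 𝓖, ∀ n, c ∈ closure (s n) := by
  choose p hp using hne
  have hcauchy : CauchySeq p := EMetric.cauchySeq_iff_le_tendsto_0.2
    ⟨_, fun n m N hn hm => Metric.edist_le_ediam_of_mem (hanti hn (hp n)) (hanti hm (hp m)), hdiam⟩
  obtain ⟨c, hc⟩ := cauchySeq_tendsto_of_complete hcauchy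
  have hcl (n : ℕ) : c ∈ closure (s n) :=
    mem_closure_of_tendsto hc (eventually_atTop.2 ⟨n, fun m hm => hanti hm (hp m)⟩)
  refine ⟨c, fun t ht => ?_, hcl⟩
  obtain ⟨ε, hε, hball⟩ := EMetric.mem_nhds_iff.1 ht
  obtain ⟨n, hn⟩ := (hdiam.eventually_lt_const hε).exists
  refine ⟨s n, hs n, fun x hx => hball ?_⟩
  rw [← Metric.ediam_closure] at hn
  exact (Metric.edist_le_ediam_of_mem (subset_closure hx) (hcl n)).trans_lt hn

theorem inter_limitSet_nonempty [PseudoEMetricSpace C] [CompleteSpace C] {𝓖 : Set (Set C)}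
    (hne : ∀ u ∈ 𝓖, u.Nonempty) (hrefine : ∀ u ∈ 𝓖, ∀ n, ∃ v ∈ 𝓖, IsFineRefinement n u v)
    {u : Set C} (hu : u ∈ 𝓖) : (u ∩ limitSet 𝓖).Nonempty := by
  have hrefine' (v : 𝓖) (n : ℕ) : ∃ w : 𝓖, IsFineRefinement n v.1 w.1 := by
    simpa using hrefine v v.2 n
  choose f hf using hrefine'
  let s (n : ℕ) : 𝓖 := n.rec (f ⟨u, hu⟩ 0) fun n v => f v n
  have hsucc (n : ℕ) : IsFineRefinement n (s n).1 (s (n + 1)).1 := hf (s n) n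
  have hanti : Antitone fun n => (s n).1 :=
    antitone_nat_of_succ_le fun n => subset_closure.trans (hsucc n).1
  have hdiam : Tendsto (fun n => Metric.ediam (s n).1) atTop (𝓝 0) :=
    (tendsto_add_atTop_iff_nat 1).1 <| tendsto_of_tendsto_of_tendsto_of_le_of_le tendsto_const_nhds
      ENNReal.tendsto_inv_nat_nhds_zero (fun _ => zero_le) fun n => (hsucc n).2
  obtain ⟨c, hc, hcs⟩ :=
    exists_mem_limitSet_of_antitone (fun n => (s n).2) (fun n => hne _ (s n).2) hanti hdiam
  exact ⟨c, (hf ⟨u, hu⟩ 0).1 (hcs 0), hc⟩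

theorem exists_not_countable_fibre {X : Type*} [MetricSpace C] [CompleteSpace C]
    [TopologicalSpace X] [T2Space X] {π : C → X} (hπ : Continuous π) {𝓖 : Set (Set C)}
    (hne : 𝓖.Nonempty) (hpair : ∀ u ∈ 𝓖, ∀ v ∈ 𝓖, (π '' u ∩ π '' v).Nonempty)
    (hsplit : ∀ u ∈ 𝓖, ∀ n, ∃ v ∈ 𝓖, ∃ w ∈ 𝓖,
      Disjoint v w ∧ IsFineRefinement n u v ∧ IsFineRefinement n u w) :
    ∃ x, ¬ (π ⁻¹' {x}).Countable := by
  have hlim (u) (hu : u ∈ 𝓖) : (u ∩ limitSet 𝓖).Nonempty := by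
    refine inter_limitSet_nonempty (fun v hv => ?_) (fun v hv n => ?_) hu
    · exact (hpair v hv v hv).left.of_image
    · obtain ⟨w, hw, -, -, -, hvw, -⟩ := hsplit v hv n
      exact ⟨w, hw, hvw⟩
  have hperfect : Perfect (limitSet 𝓖) :=
    ⟨isClosed_limitSet 𝓖, preperfect_limitSet hlim fun u hu => by
      obtain ⟨v, hv, w, hw, hvw, huv, huw⟩ := hsplit u hu 0
      exact ⟨v, hv, w, hw, hvw, subset_closure.trans huv.1, subset_closure.trans huw.1⟩⟩
  obtain ⟨u, hu⟩ := hne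
  obtain ⟨c, -, hc⟩ := hlim u hu
  obtain ⟨f, hf, -, hinj⟩ := hperfect.exists_nat_bool_injection ⟨c, hc⟩
  refine ⟨π c, fun hcount => ?_⟩
  have hfibre (z : ℕ → Bool) : f z ∈ π ⁻¹' {π c} :=
    eq_of_mem_limitSet hπ hpair (hf (mem_range_self z)) hc
  have : Uncountable (ℕ → Bool) :=
    Cardinal.aleph0_lt_mk_iff.1 (by simp [Cardinal.aleph0_lt_continuum])
  have huniv : (univ : Set (ℕ → Bool)).Countable :=
    (hcount.preimage hinj).mono fun z _ => hfibre z
  exact not_countable_univ huniv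

end LimitSet

section LusinNovikov

variable {C X ι : Type*}

theorem exists_isFineRefinement_of_mem_nhds [PseudoEMetricSpace C] {U : ι → Set C}
    (hU : TopologicalSpace.IsTopologicalBasis (range U)) {c : C} {s : Set C} (hs : s ∈ 𝓝 c)
    (n : ℕ) : ∃ i, c ∈ U i ∧ IsFineRefinement n s (U i) := by
  have hr : 0 < (n : ℝ≥0∞)⁻¹ / 2 := by simp
  obtain ⟨t, ht, htc, hts⟩ :=
    exists_mem_nhds_isClosed_subset (inter_mem hs (Metric.eball_mem_nhds c hr))
  obtain ⟨_, ⟨i, rfl⟩, hci, hit⟩ := hU.mem_nhds_iff.1 ht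
  refine ⟨i, hci, (closure_minimal hit htc).trans (hts.trans inter_subset_left), ?_⟩
  calc Metric.ediam (U i) ≤ Metric.ediam (Metric.eball c ((n : ℝ≥0∞)⁻¹ / 2)) :=
        Metric.ediam_mono (hit.trans (hts.trans inter_subset_right))
    _ ≤ 2 * ((n : ℝ≥0∞)⁻¹ / 2) := Metric.ediam_eball_le
    _ = (n : ℝ≥0∞)⁻¹ := ENNReal.mul_div_cancel two_ne_zero ENNReal.ofNat_ne_top

theorem exists_insert_commonImage_nonempty [DecidableEq ι] [EMetricSpace C] {U : ι → Set C}
    (hU : TopologicalSpace.IsTopologicalBasis (range U)) {π : C → X} {D : Set C} {S : Finset ι}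
    {i : ι} (hinj : ¬ InjOn π ((U i \ D) ∩ π ⁻¹' commonImage π U D S)) (n : ℕ) :
    ∃ j k, Disjoint (U j) (U k) ∧ IsFineRefinement n (U i) (U j) ∧ IsFineRefinement n (U i) (U k) ∧
      (commonImage π U D (insert j (insert k S))).Nonempty := by
  simp only [InjOn, not_forall] at hinj
  obtain ⟨c, ⟨⟨hcU, hcD⟩, hc⟩, d, ⟨⟨hdU, hdD⟩, -⟩, hcd, hne⟩ := hinj
  obtain ⟨s, t, hs, ht, hcs, hdt, hst⟩ := t2_separation hne
  have hUi : IsOpen (U i) := hU.isOpen (mem_range_self i)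
  obtain ⟨j, hcj, hj⟩ := exists_isFineRefinement_of_mem_nhds hU
    (inter_mem (hUi.mem_nhds hcU) (hs.mem_nhds hcs)) n
  obtain ⟨k, hdk, hk⟩ := exists_isFineRefinement_of_mem_nhds hU
    (inter_mem (hUi.mem_nhds hdU) (ht.mem_nhds hdt)) n
  refine ⟨j, k, ?_, ⟨hj.1.trans inter_subset_left, hj.2⟩, ⟨hk.1.trans inter_subset_left, hk.2⟩,
    π c, ?_⟩
  · exact hst.mono (subset_closure.trans (hj.1.trans inter_subset_right))
      (subset_closure.trans (hk.1.trans inter_subset_right))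
  · rw [commonImage_insert, commonImage_insert]
    exact ⟨⟨c, ⟨hcj, hcD⟩, rfl⟩, ⟨d, ⟨hdk, hdD⟩, hcd.symm⟩, hc⟩

theorem exists_not_countable_fibre_of_commonImage [MetricSpace C] [CompleteSpace C]
    [TopologicalSpace X] [T2Space X] {π : C → X} (hπ : Continuous π) [Countable ι] {U : ι → Set C}
    (hU : TopologicalSpace.IsTopologicalBasis (range U)) {D : Set C} (hD : D ≠ univ)
    (hinj : ∀ S : Finset ι, (commonImage π U D S).Nonempty → ∀ i ∈ S,
      ¬ InjOn π ((U i \ D) ∩ π ⁻¹' commonImage π U D S)) :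
    ∃ x, ¬ (π ⁻¹' {x}).Countable := by
  classical
  let P : Set (Finset ι) := {S | (commonImage π U D S).Nonempty}
  let T (n : ℕ) (i : ι) : Set (Finset ι) := {V | ∃ j ∈ V, ∃ k ∈ V,
    Disjoint (U j) (U k) ∧ IsFineRefinement n (U i) (U j) ∧ IsFineRefinement n (U i) (U k)}
  have hT (S) (hS : S ∈ P) (i) (hi : i ∈ S) (n) : ∃ V ∈ T n i, ∃ S' ∈ P, S ⊆ S' ∧ V ⊆ S' := by
    obtain ⟨j, k, hjk, hj, hk, hne⟩ := exists_insert_commonImage_nonempty hU (hinj S hS i hi) n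
    exact ⟨insert j (insert k S), ⟨j, by simp, k, by simp, hjk, hj, hk⟩, _, hne,
      (Finset.subset_insert k S).trans (Finset.subset_insert j _), subset_rfl⟩
  obtain ⟨c, hc⟩ := (ne_univ_iff_exists_notMem D).1 hD
  obtain ⟨_, ⟨i₀, rfl⟩, hci₀, -⟩ := hU.exists_subset_of_mem_open (mem_univ c) isOpen_univ
  have hi₀ : {i₀} ∈ P := ⟨π c, by simpa [commonImage] using ⟨c, ⟨hci₀, hc⟩, rfl⟩⟩
  obtain ⟨𝓖, hi₀𝓖, hpair, hsplit⟩ := exists_generic_set T hT hi₀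
  refine exists_not_countable_fibre hπ (𝓖 := U '' 𝓖) ⟨U i₀, i₀, hi₀𝓖 (by simp), rfl⟩ ?_ ?_
  · rintro _ ⟨i, hi, rfl⟩ _ ⟨j, hj, rfl⟩
    obtain ⟨S, ⟨x, hx⟩, hiS, hjS⟩ := hpair i hi j hj
    exact ⟨x, image_mono sdiff_subset (commonImage_subset hiS hx),
      image_mono sdiff_subset (commonImage_subset hjS hx)⟩
  · rintro _ ⟨i, hi, rfl⟩ n
    obtain ⟨V, ⟨j, hj, k, hk, h⟩, hV⟩ := hsplit i hi n
    exact ⟨U j, ⟨j, hV hj, rfl⟩, U k, ⟨k, hV hk, rfl⟩, h⟩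

theorem isSigmaInjOn_univ_of_countable_fibres [TopologicalSpace C] [PolishSpace C]
    [MeasurableSpace C] [BorelSpace C] [TopologicalSpace X] [T2Space X] {π : C → X}
    (hπ : Continuous π) (hcount : ∀ x, (π ⁻¹' {x}).Countable) : IsSigmaInjOn π univ := by
  let := TopologicalSpace.upgradeIsCompletelyMetrizable C
  let U : TopologicalSpace.countableBasis C → Set C := (↑)
  have : Countable (TopologicalSpace.countableBasis C) :=
    (TopologicalSpace.countable_countableBasis C).to_subtype
  have hU : TopologicalSpace.IsTopologicalBasis (range U) :=
    Subtype.range_coe.symm ▸ TopologicalSpace.isBasis_countableBasis C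
  obtain ⟨D, hD, hmin⟩ := exists_isSigmaInjOn_forall_commonImage_nonempty π U
  suffices D = univ from this ▸ hD
  by_contra hDne
  obtain ⟨x, hx⟩ := exists_not_countable_fibre_of_commonImage hπ hU hDne fun S hS _ hi =>
    not_injOn_inter_preimage_commonImage hπ (fun i => hU.isOpen (mem_range_self i)) hD
      (hmin S hS) hi
  exact hx (hcount x)

/-- The **Lusin–Novikov theorem** for countable-to-one Borel maps. -/
theorem exists_measurable_nat_injective_prodMk [MeasurableSpace C] [StandardBorelSpace C]
    [MeasurableSpace X] [CountablySeparated X] {π : C → X} (hπ : Measurable π)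
    (hcount : ∀ x, (π ⁻¹' {x}).Countable) :
    ∃ n : C → ℕ, Measurable n ∧ Injective fun c => (π c, n c) := by
  obtain ⟨e, he, heinj⟩ := measurable_injection_nat_bool_of_countablySeparated X
  have hcount' (z) : (e ∘ π ⁻¹' {z}).Countable := by
    rw [preimage_comp, ← biUnion_preimage_singleton]
    exact (subsingleton_singleton.preimage heinj).countable.biUnion fun x _ => hcount x
  let τ := upgradeStandardBorel C
  obtain ⟨τ', hle, hcont, hpolish⟩ := (he.comp hπ).exists_continuous
  have hborel : @BorelSpace C τ' _ :=
    @BorelSpace.mk C τ' _ ((eq_borel_upgradeStandardBorel C).trans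
      (borel_eq_borel_of_le hpolish τ.toPolishSpace hle).symm)
  obtain ⟨n, hn, hinj⟩ := (@isSigmaInjOn_univ_of_countable_fibres C _ τ' hpolish _ hborel _ _ _
    hcont hcount').exists_measurable_nat
  refine ⟨n, hn, fun c d hcd => hinj ?_⟩
  obtain ⟨hπcd, hncd⟩ := Prod.mk.inj hcd
  exact Prod.ext (congrArg e hπcd) hncd

theorem exists_measurable_nat_injective_fst_snd {Y : Type*} [MeasurableSpace X]
    [StandardBorelSpace X] [MeasurableSpace Y] [StandardBorelSpace Y] {R : Set (X × Y)}
    (hR : MeasurableSet R) (hfst : ∀ x, {y | (x, y) ∈ R}.Countable)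
    (hsnd : ∀ y, {x | (x, y) ∈ R}.Countable) :
    ∃ n : R → ℕ, Measurable n ∧ (Injective fun p => (p.1.1, n p)) ∧
      Injective fun p => (p.1.2, n p) := by
  have := hR.standardBorel
  obtain ⟨n₁, hn₁, hinj₁⟩ := exists_measurable_nat_injective_prodMk
    (measurable_fst.comp (measurable_subtype_coe (p := (· ∈ R)))) fun x => by
      refine MapsTo.countable_of_injOn (f := fun p : R => p.1.2) ?_ ?_ (hfst x)
      · rintro p rfl
        exact p.2
      · exact fun p hp q hq h => Subtype.ext (Prod.ext (hp.trans hq.symm) h)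
  obtain ⟨n₂, hn₂, hinj₂⟩ := exists_measurable_nat_injective_prodMk
    (measurable_snd.comp (measurable_subtype_coe (p := (· ∈ R)))) fun y => by
      refine MapsTo.countable_of_injOn (f := fun p : R => p.1.1) ?_ ?_ (hsnd y)
      · rintro p rfl
        exact p.2
      · exact fun p hp q hq h => Subtype.ext (Prod.ext h (hp.trans hq.symm))
  refine ⟨fun p => Nat.pair (n₁ p) (n₂ p), ?_, fun p q h => hinj₁ ?_, fun p q h => hinj₂ ?_⟩
  · exact (measurable_of_countable (uncurry Nat.pair)).comp (hn₁.prodMk hn₂)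
  all_goals
    obtain ⟨hpq, hpair⟩ := Prod.mk.inj h
    obtain ⟨h₁, h₂⟩ := Nat.pair_eq_pair.1 hpair
  · exact Prod.ext hpq h₁
  · exact Prod.ext hpq h₂

end LusinNovikov

section FullGroup

/-- The full group `[E]` of an equivalence relation `E`: the Borel automorphisms that move every
point within its `E`-class. -/
def fullGroup {W : Type*} [MeasurableSpace W] (E : Setoid W) : Subgroup (Equiv.Perm W) where
  carrier := {σ | Measurable σ ∧ Measurable σ.symm ∧ ∀ w, E w (σ w)}
  one_mem' := ⟨measurable_id, measurable_id, E.refl⟩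
  mul_mem' := fun ⟨hσ, hσ', hσE⟩ ⟨hτ, hτ', hτE⟩ =>
    ⟨hσ.comp hτ, hτ'.comp hσ', fun w => E.trans (hτE w) (hσE _)⟩
  inv_mem' := fun {σ} ⟨hσ, hσ', hσE⟩ =>
    ⟨hσ', hσ, fun w => by simpa using E.symm (hσE (σ.symm w))⟩

variable {S W : Type*} [MeasurableSpace S] [MeasurableSpace W]

theorem measurable_viaEmbedding {e : Equiv.Perm S} (he : Measurable e) {ι : S ↪ W}
    (hι : MeasurableEmbedding ι) : Measurable (e.viaEmbedding ι) := by
  have heq : ⇑(e.viaEmbedding ι) = extend ι (ι ∘ e) id := by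
    funext w
    by_cases hw : w ∈ range ι
    · obtain ⟨s, rfl⟩ := hw
      rw [e.viaEmbedding_apply, ι.injective.extend_apply, comp_apply]
    · rw [e.viaEmbedding_apply_of_notMem ι w hw, extend_apply' _ _ w hw, id]
  exact heq ▸ hι.measurable_extend (hι.measurable.comp he) measurable_id

theorem viaEmbedding_mem_fullGroup {E : Setoid W} {e : Equiv.Perm S} (he : Measurable e)
    (he' : Measurable e.symm) {ι : S ↪ W} (hι : MeasurableEmbedding ι)
    (hE : ∀ s, E (ι s) (ι (e s))) : e.viaEmbedding ι ∈ fullGroup E := by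
  have hsymm : (e.viaEmbedding ι).symm = Equiv.Perm.viaEmbedding e.symm ι :=
    (map_inv (Equiv.Perm.viaEmbeddingHom ι) e).symm
  refine ⟨measurable_viaEmbedding he hι, hsymm ▸ measurable_viaEmbedding he' hι, fun w => ?_⟩
  by_cases hw : w ∈ range ι
  · obtain ⟨s, rfl⟩ := hw
    rw [e.viaEmbedding_apply]
    exact hE s
  · rw [e.viaEmbedding_apply_of_notMem ι w hw]

end FullGroup

section Action

variable {Y : Type*}

/-- The translation `(y, j) ↦ (y, j + 1)` of `Y × ℤ`. -/
def shiftPerm (Y : Type*) : Equiv.Perm (Y × ℤ) :=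
  (Equiv.refl Y).prodCongr (Equiv.addRight 1)

theorem shiftPerm_pow_apply (m : ℕ) (y : Y) (j : ℤ) :
    (shiftPerm Y ^ m) (y, j) = (y, j + m) := by
  induction m with
  | zero => simp
  | succ m ih => rw [pow_succ', Equiv.Perm.mul_apply, ih]; simp [shiftPerm, add_assoc]

variable [MeasurableSpace Y]

theorem shiftPerm_mem_fullGroup (F : Setoid Y) :
    shiftPerm Y ∈ fullGroup (F.comap (Prod.fst : Y × ℤ → Y)) :=
  ⟨measurable_fst.prodMk ((measurable_of_countable (Equiv.addRight (1 : ℤ))).comp measurable_snd),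
    measurable_fst.prodMk ((measurable_of_countable (Equiv.addRight (1 : ℤ)).symm).comp
      measurable_snd), fun w => F.refl w.1⟩

/-- The two sheets `j ≥ 0` and `j < 0` of `Y × ℤ` receive the first and the second coordinates of
the pairs in `F`, so that swapping the sheets along `F` is a well-defined involution. -/
theorem exists_mem_fullGroup_apply_eq_negSucc [StandardBorelSpace Y] (F : Setoid Y)
    (hF : MeasurableSet {p : Y × Y | F p.1 p.2}) (hcount : ∀ y, {y' | F y y'}.Countable) :
    ∃ σ ∈ fullGroup (F.comap (Prod.fst : Y × ℤ → Y)),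
      ∀ y y', F y y' → ∃ n : ℕ, σ (y, n) = (y', Int.negSucc n) := by
  have := hF.standardBorel
  obtain ⟨n, hn, hfst, hsnd⟩ := exists_measurable_nat_injective_fst_snd hF hcount fun y => by
    simpa only [mem_ofPred_eq, F.comm'] using hcount y
  let k : {p : Y × Y | F p.1 p.2} × Bool → Y × ℤ := fun q =>
    bif q.2 then (q.1.1.2, Int.negSucc (n q.1)) else (q.1.1.1, Int.ofNat (n q.1))
  have hkmeas : Measurable k := by
    refine measurable_from_prod_countable_left fun b => ?_
    cases b
    · exact (measurable_fst.comp measurable_subtype_coe).prodMk (measurable_from_top.comp hn)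
    · exact (measurable_snd.comp measurable_subtype_coe).prodMk (measurable_from_top.comp hn)
  have hkinj : Injective k := by
    rintro ⟨p, _ | _⟩ ⟨q, _ | _⟩ h
    · obtain ⟨hpq, hn⟩ := Prod.mk.inj h
      exact Prod.ext (hfst (Prod.ext hpq (Int.ofNat.inj hn))) rfl
    · cases congrArg Prod.snd h
    · cases congrArg Prod.snd h
    · obtain ⟨hpq, hn⟩ := Prod.mk.inj h
      exact Prod.ext (hsnd (Prod.ext hpq (Int.negSucc.inj hn))) rfl
  let swap : Equiv.Perm ({p : Y × Y | F p.1 p.2} × Bool) := (Equiv.refl _).prodCongr Equiv.boolNot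
  have hswap : Measurable swap :=
    measurable_fst.prodMk ((measurable_of_countable not).comp measurable_snd)
  refine ⟨swap.viaEmbedding ⟨k, hkinj⟩, viaEmbedding_mem_fullGroup hswap hswap
    (hkmeas.measurableEmbedding hkinj) ?_, fun y y' h => ⟨n ⟨(y, y'), h⟩, ?_⟩⟩
  · rintro ⟨p, _ | _⟩
    · exact p.2
    · exact F.symm p.2
  · exact swap.viaEmbedding_apply ⟨k, hkinj⟩ (⟨(y, y'), h⟩, false)

/-- A form of the **Feldman–Moore theorem**, with `F` realised on the slice `Y × {0}`. -/
theorem exists_freeGroup_hom_perm [StandardBorelSpace Y] (F : Setoid Y)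
    (hF : MeasurableSet {p : Y × Y | F p.1 p.2}) (hcount : ∀ y, {y' | F y y'}.Countable) :
    ∃ ρ : FreeGroup (Fin 2) →* Equiv.Perm (Y × ℤ), (∀ γ, Measurable (ρ γ)) ∧
      ∀ y y', F y y' ↔ ∃ γ, ρ γ (y, 0) = (y', 0) := by
  obtain ⟨σ, hσ, hσF⟩ := exists_mem_fullGroup_apply_eq_negSucc F hF hcount
  let ρ : FreeGroup (Fin 2) →* Equiv.Perm (Y × ℤ) := FreeGroup.lift ![shiftPerm Y, σ]
  have hρ (γ) : ρ γ ∈ fullGroup (F.comap (Prod.fst : Y × ℤ → Y)) := by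
    refine FreeGroup.range_lift_le ?_ (MonoidHom.mem_range.2 ⟨γ, rfl⟩)
    simp only [Matrix.range_cons, Matrix.range_empty, union_empty, union_subset_iff,
      singleton_subset_iff, SetLike.mem_coe]
    exact ⟨shiftPerm_mem_fullGroup F, hσ⟩
  refine ⟨ρ, fun γ => (hρ γ).1, fun y y' => ⟨fun h => ?_, ?_⟩⟩
  · obtain ⟨n, hn⟩ := hσF y y' h
    have hword : (shiftPerm Y ^ (n + 1) * σ * shiftPerm Y ^ n) (y, 0) = (y', 0) := by
      simp only [Equiv.Perm.mul_apply, shiftPerm_pow_apply, zero_add, hn]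
      simp [Int.negSucc_eq]
    exact ⟨.of 0 ^ (n + 1) * .of 1 * .of 0 ^ n, by simpa [ρ] using hword⟩
  · rintro ⟨γ, hγ⟩
    simpa [Setoid.comap_rel, hγ] using (hρ γ).2.2 (y, 0)

theorem exists_measurable_injective_shiftAct {W : Type*} [MeasurableSpace W] [CountablySeparated W]
    {ρ : FreeGroup (Fin 2) →* Equiv.Perm W} (hρ : ∀ γ, Measurable (ρ γ)) :
    ∃ ψ : W → FreeGroup (Fin 2) → ℕ → Bool, Measurable ψ ∧ Injective ψ ∧
      ∀ γ w, ψ (ρ γ w) = ShiftAct γ (ψ w) := by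
  obtain ⟨c, hc, hinj⟩ := measurable_injection_nat_bool_of_countablySeparated W
  refine ⟨fun w δ => c (ρ δ⁻¹ w), ?_, fun w w' h => ?_, fun γ w => ?_⟩
  · exact measurable_pi_lambda _ fun δ => hc.comp (hρ δ⁻¹)
  · simpa using hinj (congrFun h 1)
  · funext δ
    simp [ShiftAct]

end Action

theorem dougherty_jackson_kechris_E_infinity_maximal_general
    {Y : Type*} [MeasurableSpace Y] [StandardBorelSpace Y]
    (F : Y → Y → Prop) (hF : Equivalence F)
    (hBorel : MeasurableSet {p : Y × Y | F p.1 p.2})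
    (hctble : ∀ y : Y, {y' : Y | F y y'}.Countable) :
    ∃ φ : Y → (FreeGroup (Fin 2) → (ℕ → Bool)), MeasurableEmbedding φ ∧
      ∀ y₁ y₂ : Y, F y₁ y₂ ↔ ∃ γ : FreeGroup (Fin 2), ShiftAct γ (φ y₁) = φ y₂ := by
  obtain ⟨ρ, hρ, hρF⟩ := exists_freeGroup_hom_perm ⟨F, hF⟩ hBorel hctble
  obtain ⟨ψ, hψ, hinj, hequiv⟩ := exists_measurable_injective_shiftAct hρ
  have hembed : MeasurableEmbedding fun y => ψ (y, 0) :=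
    (hψ.comp measurable_prodMk_right).measurableEmbedding
      (hinj.comp (Prod.mk_left_injective 0))
  refine ⟨_, hembed, fun y₁ y₂ => (hρF y₁ y₂).trans (exists_congr fun γ => ?_)⟩
  rw [← hequiv, hinj.eq_iff]

/-- Dougherty–Jackson–Kechris: every countable Borel equivalence relation on a Polish space
is Borel reducible to the orbit equivalence relation `E∞ = E(F₂, 2^ℕ)` of the shift action
of `F₂` on `F₂ → (ℕ → Bool)`. -/
theorem dougherty_jackson_kechris_E_infinity_maximal
    (Y : Type) [TopologicalSpace Y] [PolishSpace Y] [MeasurableSpace Y] [BorelSpace Y]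
    (F : Y → Y → Prop) (hF : Equivalence F)
    (hBorel : MeasurableSet {p : Y × Y | F p.1 p.2})
    (hctble : ∀ y : Y, {y' : Y | F y y'}.Countable) :
    ∃ φ : Y → (FreeGroup (Fin 2) → (ℕ → Bool)), Measurable φ ∧
      ∀ y₁ y₂ : Y, F y₁ y₂ ↔ ∃ γ : FreeGroup (Fin 2), ShiftAct γ (φ y₁) = φ y₂ := by
  obtain ⟨φ, hφ, hφF⟩ := dougherty_jackson_kechris_E_infinity_maximal_general F hF hBorel hctble
  exact ⟨φ, hφ.measurable, hφF⟩
end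

section
/- Isomorphism of countable graphs (binary relations on ℕ) is analytic but not Borel: the relation R ⊆ M × M, where M = (ℕ × ℕ → Bool) and x R y iff there exists a bijection π : ℕ ≃ ℕ with x (π i, π j) = y (i, j) for all i, j ∈ ℕ, is an analytic subset of the Polish space M × M but is not a Borel subset of M × M. -/
/-- Isomorphism of countable graphs (binary relations on `ℕ`), coded as points of
`(ℕ × ℕ) → Bool`. -/
def GraphIso (x y : (ℕ × ℕ) → Bool) : Prop :=
  ∃ π : ℕ ≃ ℕ, ∀ i j : ℕ, x (π i, π j) = y (i, j)

/-!
The isomorphism relation is the image of `M × Sym(ℕ)` under the continuous map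
`(x, π) ↦ (x, x ∘ π)`, hence analytic.

Every analytic set of binary sequences has the form `{x | S_x has an infinite branch}`, where `S_x`
is the fibre over `x` of a set `S` of pairs of finite sequences. Such sets `S` are themselves coded
by binary sequences, so a diagonal argument shows that the collection of all `T ⊆ ℕ^{<ℕ}` with a
branch is not Borel. It reduces to graph isomorphism, as follows, where nodes are the elements of
the largest tree contained in `T`. For an integer `c` let `Γ_c` be the graph on finitely supported
integral chains of nodes of `T`, with an edge from each chain of degree `c` on level `n + 1` to its
projection to level `n`. If `T` has a branch `b`, adding multiples of the restrictions of `b`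
identifies all the graphs `Γ_c`. If `T` has no branch, then `Γ_1` is well-founded, since a chain of
degree `1` has a node in its support, whereas `Γ_0` contains the infinite path of zero chains.
-/

open MeasureTheory PiNat Topology

section Topology

variable {X ι κ β : Type*} [TopologicalSpace X] [TopologicalSpace ι] [DiscreteTopology ι]
  [TopologicalSpace β]

theorem continuous_eval_of_discrete {x : X → ι → β} {i : X → ι} (hx : Continuous x)
    (hi : Continuous i) : Continuous fun a => x a (i a) :=
  (continuous_prod_of_discrete_right (f := fun p : (ι → β) × ι => p.1 p.2)).2 continuous_apply
    |>.comp (hx.prodMk hi)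

theorem isClosed_setOf_leftInverse [TopologicalSpace κ] [T2Space κ] :
    IsClosed {p : (ι → κ) × (κ → ι) | Function.LeftInverse p.1 p.2} := by
  simp only [Function.LeftInverse, Set.ofPred_forall]
  exact isClosed_iInter fun k => isClosed_eq
    (continuous_eval_of_discrete continuous_fst ((continuous_apply k).comp continuous_snd))
    continuous_const

theorem isLocallyConstant_res (n : ℕ) : IsLocallyConstant fun x : ℕ → ι => res x n := by
  refine (IsLocallyConstant.iff_exists_open _).2 fun x =>
    ⟨cylinder x n, isOpen_cylinder _ x n, self_mem_cylinder x n, fun y hy => ?_⟩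
  rwa [cylinder_eq_res] at hy

theorem tendsto_of_res_eq {u : ℕ → ℕ → β} {x : ℕ → β} (h : ∀ n, res (u n) n = res x n) :
    Filter.Tendsto u Filter.atTop (𝓝 x) := by
  refine tendsto_pi_nhds.2 fun i => tendsto_const_nhds.congr' ?_
  filter_upwards [Filter.eventually_gt_atTop i] with n hn
  exact (res_eq_res.1 (h n) hn).symm

end Topology

section Branches

variable {α : Type*} {T : Set (List α)}

/-- The set `T` of finite sequences has an infinite branch: a sequence all of whose finite
restrictions lie in `T`. Sequences are restricted by `PiNat.res`, which puts the latest entry first,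
so throughout the nodes below `s` are the suffixes of `s`. -/
def HasBranch (T : Set (List α)) : Prop := ∃ b : ℕ → α, ∀ n, res b n ∈ T

/-- The `n`-th level of the largest tree contained in `T`. -/
def treeLevel (T : Set (List α)) (n : ℕ) : Set (List α) :=
  {s | s.length = n ∧ ∀ t, t <:+ s → t ∈ T}

/-- The immediate extension relation of the largest tree contained in `T`, directed so that it is
well-founded exactly when there is no branch. -/
def ExtendsIn (T : Set (List α)) (s t : List α) : Prop :=
  s.tail = t ∧ s ∈ treeLevel T (t.length + 1)

theorem res_suffix_res (b : ℕ → α) {m n : ℕ} (h : m ≤ n) : res b m <:+ res b n := by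
  induction n, h using Nat.le_induction with
  | base => exact List.suffix_rfl
  | succ n _ ih => exact ih.trans (List.suffix_cons _ _)

theorem eq_res_of_suffix_res {b : ℕ → α} {s : List α} {n : ℕ} (h : s <:+ res b n) :
    s = res b s.length := by
  refine (List.suffix_of_suffix_length_le h (res_suffix_res b ?_) (by simp)).eq_of_length (by simp)
  simpa using h.length_le

theorem res_mem_treeLevel {b : ℕ → α} (hb : ∀ n, res b n ∈ T) (n : ℕ) :
    res b n ∈ treeLevel T n :=
  ⟨res_length b n, fun _ ht => eq_res_of_suffix_res ht ▸ hb _⟩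

theorem exists_forall_res_eq {s : ℕ → List α} (hlen : ∀ n, (s n).length = n)
    (htail : ∀ n, (s (n + 1)).tail = s n) : ∃ b : ℕ → α, ∀ n, res b n = s n := by
  have hcons : ∀ n, ∃ a, s (n + 1) = a :: s n := fun n => by
    obtain ⟨a, t, h⟩ := List.exists_cons_of_length_eq_add_one (hlen (n + 1))
    exact ⟨a, by rw [← htail n, h, List.tail_cons]⟩
  choose b hb using hcons
  refine ⟨b, fun n => ?_⟩
  induction n with
  | zero => exact (List.length_eq_zero_iff.1 (hlen 0)).symm
  | succ n ih => rw [res_succ, ih, hb]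

theorem wellFounded_extendsIn (hT : ¬ HasBranch T) : WellFounded (ExtendsIn T) := by
  rw [wellFounded_iff_isEmpty_descending_chain]
  refine ⟨fun ⟨s, hs⟩ => hT ?_⟩
  have hlen : ∀ n, (s n).length = (s 0).length + n := by
    intro n
    induction n with
    | zero => rfl
    | succ n ih => rw [(hs n).2.1, ih, add_assoc]
  -- The suffix of length `n` of `s n` is the restriction to `n` of the limiting branch.
  obtain ⟨b, hb⟩ := exists_forall_res_eq (s := fun n => (s n).drop (s 0).length)
    (fun n => by rw [List.length_drop, hlen, Nat.add_sub_cancel_left])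
    (fun n => by rw [List.tail_drop, ← (hs n).1, List.drop_tail])
  refine ⟨b, fun n => (hs n).2.2 _ ?_⟩
  rw [hb, ← (hs n).1]
  exact (List.drop_suffix _ _).trans (List.tail_suffix _)

end Branches

section Chains

variable {α G : Type*} [AddCommGroup G] {T : Set (List α)}

/-- The graph of chains of degree `c` in the largest tree contained in `T`. A vertex is a level
together with a finitely supported `G`-valued chain of finite sequences, and each chain of degree
`c` of nodes on level `n + 1` is joined to its projection to level `n`. Every chain is a vertex on
every level, so that translations by chains permute the vertices. -/
def ChainRel (T : Set (List α)) (c : G) (u v : ℕ × (List α →₀ G)) : Prop :=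
  u.1 = v.1 + 1 ∧ u.2.mapDomain List.tail = v.2 ∧ u.2.degree = c ∧
    u.2 ∈ Finsupp.supported G ℤ (treeLevel T u.1)

theorem not_wellFounded_chainRel_zero (T : Set (List α)) :
    ¬ WellFounded (ChainRel T (0 : G)) := by
  rw [wellFounded_iff_isEmpty_descending_chain, not_isEmpty_iff]
  exact ⟨fun n => (n, 0), fun n =>
    ⟨rfl, Finsupp.mapDomain_zero, map_zero _, Submodule.zero_mem _⟩⟩

theorem acc_chainRel_of_mem_support {c : G} {s : List α}
    (hs : Acc (ExtendsIn T) s) {v : ℕ × (List α →₀ G)} (hv : s ∈ v.2.support) :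
    Acc (ChainRel T c) v := by
  induction hs generalizing v with
  | intro s _ ih =>
    refine ⟨v, fun u ⟨hlevel, hproj, _, hsupp⟩ => ?_⟩
    classical
    -- Projecting does not create support, so `u` has an extension `t` of `s` in its support.
    obtain ⟨t, ht, rfl⟩ := Finset.mem_image.1 (Finsupp.mapDomain_support (hproj ▸ hv))
    have htT : t ∈ treeLevel T u.1 := hsupp ht
    have hlen : t.tail.length + 1 = u.1 := by rw [List.length_tail, htT.1]; omega
    exact ih t ⟨rfl, hlen ▸ htT⟩ ht

theorem wellFounded_chainRel (hT : ¬ HasBranch T) {c : G} (hc : c ≠ 0) :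
    WellFounded (ChainRel T c) := by
  refine ⟨fun v => ⟨v, fun u hu => ?_⟩⟩
  have hne : u.2 ≠ 0 := fun h => hc (by rw [← hu.2.2.1, h, map_zero])
  obtain ⟨s, hs⟩ := Finsupp.support_nonempty_iff.2 hne
  exact acc_chainRel_of_mem_support ((wellFounded_extendsIn hT).apply s) hs

theorem chainRel_add_single_iff {b : ℕ → α} (hb : ∀ n, res b n ∈ T) {c d : G}
    {u v : ℕ × (List α →₀ G)} :
    ChainRel T (c + d) (u.1, u.2 + Finsupp.single (res b u.1) d)
      (v.1, v.2 + Finsupp.single (res b v.1) d) ↔ ChainRel T c u v := by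
  obtain ⟨m, f⟩ := u
  obtain ⟨n, g⟩ := v
  simp only [ChainRel]
  refine and_congr_right ?_
  rintro rfl
  have hsupp : Finsupp.single (res b (n + 1)) d ∈ Finsupp.supported G ℤ (treeLevel T (n + 1)) :=
    Finsupp.single_mem_supported ℤ d (res_mem_treeLevel hb _)
  rw [Finsupp.mapDomain_add, Finsupp.mapDomain_single, res_succ, List.tail_cons, add_left_inj,
    map_add, Finsupp.degree_single, add_left_inj, ← res_succ, Submodule.add_mem_iff_left _ hsupp]

theorem HasBranch.nonempty_chainRel_relIso (hT : HasBranch T) (c d : G) :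
    Nonempty (ChainRel T c ≃r ChainRel T d) := by
  obtain ⟨b, hb⟩ := hT
  let τ : ℕ × (List α →₀ G) ≃ ℕ × (List α →₀ G) := Equiv.prodShear (Equiv.refl ℕ)
    fun n => Equiv.addRight (Finsupp.single (res b n) (d - c))
  refine ⟨⟨τ, fun {u v} => ?_⟩⟩
  have h := chainRel_add_single_iff hb (c := c) (d := d - c) (u := u) (v := v)
  rwa [add_sub_cancel] at h

theorem nonempty_chainRel_relIso_iff {c : G} (hc : c ≠ 0) :
    Nonempty (ChainRel T (0 : G) ≃r ChainRel T c) ↔ HasBranch T := by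
  refine ⟨fun ⟨e⟩ => ?_, fun hT => hT.nonempty_chainRel_relIso 0 c⟩
  by_contra hT
  exact not_wellFounded_chainRel_zero T (e.toRelEmbedding.wellFounded (wellFounded_chainRel hT hc))

theorem measurable_chainRel [Countable α] (c : G) (u v : ℕ × (List α →₀ G)) :
    Measurable fun T : Set (List α) => ChainRel T c u v := by
  have hsupp : Measurable fun T : Set (List α) => u.2 ∈ Finsupp.supported G ℤ (treeLevel T u.1) :=
    .forall fun s => measurable_const.imp <| measurable_const.and <|
      .forall fun t => measurable_const.imp (measurable_set_mem t)
  exact measurable_const.and <| measurable_const.and <| measurable_const.and hsupp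

end Chains

section Coding

variable {V W : Type*}

open Classical in
/-- The code of a relation `r` on `V` along an enumeration `e` of `V`. -/
noncomputable def relCode (e : ℕ ≃ V) (r : V → V → Prop) (p : ℕ × ℕ) : Bool :=
  decide (r (e p.1) (e p.2))

theorem relCode_eq_true_iff {e : ℕ ≃ V} {r : V → V → Prop} {p : ℕ × ℕ} :
    relCode e r p = true ↔ r (e p.1) (e p.2) := by
  simp [relCode]

theorem graphIso_relCode_iff {e : ℕ ≃ V} {f : ℕ ≃ W} {r : V → V → Prop} {s : W → W → Prop} :
    GraphIso (relCode e r) (relCode f s) ↔ Nonempty (s ≃r r) := by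
  have hiff (π : ℕ ≃ ℕ) (i j : ℕ) : relCode e r (π i, π j) = relCode f s (i, j) ↔
      (r (e (π i)) (e (π j)) ↔ s (f i) (f j)) := by
    rw [Bool.eq_iff_iff, relCode_eq_true_iff, relCode_eq_true_iff]
  simp only [GraphIso, hiff]
  constructor
  · rintro ⟨π, hπ⟩
    exact ⟨⟨(f.symm.trans π).trans e, fun {a b} => by simpa using hπ (f.symm a) (f.symm b)⟩⟩
  · rintro ⟨g⟩
    exact ⟨(f.trans g.toEquiv).trans e.symm, fun i j => by simp [g.map_rel_iff]⟩

theorem measurable_relCode {Ω : Type*} [MeasurableSpace Ω] (e : ℕ ≃ V) {r : Ω → V → V → Prop}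
    (hr : ∀ u v, Measurable fun ω => r ω u v) : Measurable fun ω => relCode e (r ω) :=
  measurable_pi_lambda _ fun p => measurable_to_bool <| by
    simpa [Set.preimage, relCode_eq_true_iff] using hr (e p.1) (e p.2)

end Coding

section Projection

variable {α β : Type*}

/-- The fibre over `x` of a set `S` of pairs of finite sequences. The `x` whose fibre has a branch
form the projection `p[S]` of descriptive set theory. -/
def fiberAt (S : Set (List α × List β)) (x : ℕ → α) : Set (List β) :=
  {s | (res x s.length, s) ∈ S}

theorem hasBranch_fiberAt_iff {S : Set (List α × List β)} {x : ℕ → α} :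
    HasBranch (fiberAt S x) ↔ ∃ b : ℕ → β, ∀ n, (res x n, res b n) ∈ S := by
  simp [HasBranch, fiberAt]

theorem exists_setOf_hasBranch_fiberAt_eq [TopologicalSpace α] [T2Space α] {A : Set (ℕ → α)}
    (hA : AnalyticSet A) :
    ∃ S : Set (List α × List ℕ), {x | HasBranch (fiberAt S x)} = A := by
  rw [AnalyticSet] at hA
  rcases hA with rfl | ⟨f, hf, rfl⟩
  · exact ⟨∅, by simp [hasBranch_fiberAt_iff]⟩
  refine ⟨{q | ∃ b n, (res (f b) n, res b n) = q}, Set.ext fun x => ?_⟩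
  simp only [Set.mem_ofPred_eq, hasBranch_fiberAt_iff, Set.mem_range]
  constructor
  · rintro ⟨b, hb⟩
    have happrox : ∀ n, ∃ b', res (f b') n = res x n ∧ res b' n = res b n := fun n => by
      obtain ⟨b', m, h⟩ := hb n
      obtain ⟨hx, hb'⟩ := Prod.mk.inj h
      obtain rfl : m = n := by simpa using congrArg List.length hb'
      exact ⟨b', hx, hb'⟩
    choose u hux hub using happrox
    exact ⟨b, tendsto_nhds_unique ((hf.tendsto b).comp (tendsto_of_res_eq hub))
      (tendsto_of_res_eq hux)⟩
  · rintro ⟨b, rfl⟩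
    exact ⟨b, fun n => ⟨b, n, rfl⟩⟩

/-- The subset of an encodable type coded by a binary sequence. -/
def decodeSet (Q : Type*) [Encodable Q] (z : ℕ → Bool) : Set Q :=
  {q | z (Encodable.encode q) = true}

theorem decodeSet_surjective (Q : Type*) [Encodable Q] : Function.Surjective (decodeSet Q) := by
  classical
  intro S
  exact ⟨fun k => decide (∃ q ∈ S, Encodable.encode q = k), by ext; simp [decodeSet]⟩

theorem measurable_fiberAt_decodeSet [Encodable β] :
    Measurable fun z => fiberAt (decodeSet (List Bool × List β) z) z := by
  refine measurable_set_iff.2 fun s => ?_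
  have hcode : Continuous fun z : ℕ → Bool => Encodable.encode (res z s.length, s) :=
    ((isLocallyConstant_res s.length).comp fun t => Encodable.encode (t, s)).continuous
  exact (continuous_eval_of_discrete continuous_id hcode).measurable.eq_const true

theorem not_measurableSet_setOf_hasBranch : ¬ MeasurableSet {T : Set (List ℕ) | HasBranch T} := by
  intro h
  have hdiag : MeasurableSet {z | HasBranch (fiberAt (decodeSet (List Bool × List ℕ) z) z)} :=
    measurable_fiberAt_decodeSet h
  have : PolishSpace (ℕ → Bool) := { }
  obtain ⟨S, hS⟩ := exists_setOf_hasBranch_fiberAt_eq hdiag.compl.analyticSet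
  obtain ⟨z, rfl⟩ := decodeSet_surjective _ S
  exact iff_not_self (Set.ext_iff.1 hS z)

end Projection

theorem analyticSet_graphIso :
    AnalyticSet {p : ((ℕ × ℕ) → Bool) × ((ℕ × ℕ) → Bool) | GraphIso p.1 p.2} := by
  let P : Set ((ℕ → ℕ) × (ℕ → ℕ)) :=
    {q | Function.LeftInverse q.2 q.1} ∩ {q | Function.LeftInverse q.1 q.2}
  have hP : IsClosed P :=
    (isClosed_setOf_leftInverse.preimage continuous_swap).inter isClosed_setOf_leftInverse
  have : PolishSpace P := hP.polishSpace
  let act : ((ℕ × ℕ) → Bool) × P → ((ℕ × ℕ) → Bool) × ((ℕ × ℕ) → Bool) :=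
    fun q => (q.1, fun p => q.1 (q.2.1.1 p.1, q.2.1.1 p.2))
  have hact : Continuous act := by
    refine continuous_fst.prodMk (continuous_pi fun p =>
      continuous_eval_of_discrete continuous_fst ?_)
    fun_prop
  have : PolishSpace (((ℕ × ℕ) → Bool) × P) := { }
  convert analyticSet_range_of_polishSpace hact using 1
  ext p
  constructor
  · rintro ⟨π, hπ⟩
    exact ⟨(p.1, ⟨(π, π.symm), π.symm_apply_apply, π.apply_symm_apply⟩),
      Prod.ext rfl (funext fun q => hπ q.1 q.2)⟩
  · rintro ⟨⟨x, ⟨q, hleft, hright⟩⟩, rfl⟩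
    exact ⟨⟨q.1, q.2, hleft, hright⟩, fun _ _ => rfl⟩

theorem not_measurableSet_graphIso :
    ¬ MeasurableSet {p : ((ℕ × ℕ) → Bool) × ((ℕ × ℕ) → Bool) | GraphIso p.1 p.2} := by
  intro h
  obtain ⟨e⟩ : Nonempty (ℕ ≃ ℕ × (List ℕ →₀ ℤ)) := nonempty_equiv_of_countable
  have hcode (c : ℤ) : Measurable fun T : Set (List ℕ) => relCode e (ChainRel T c) :=
    measurable_relCode e (measurable_chainRel c)
  have hpre := ((hcode 1).prodMk (hcode 0)) h
  refine not_measurableSet_setOf_hasBranch ?_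
  simpa [graphIso_relCode_iff, nonempty_chainRel_relIso_iff] using hpre

/-- Graph isomorphism is an analytic, non-Borel subset of the square of the Polish space
`(ℕ × ℕ) → Bool`. -/
theorem graphIso_analytic_not_borel :
    MeasureTheory.AnalyticSet
      {p : ((ℕ × ℕ) → Bool) × ((ℕ × ℕ) → Bool) | GraphIso p.1 p.2} ∧
    ¬ MeasurableSet {p : ((ℕ × ℕ) → Bool) × ((ℕ × ℕ) → Bool) | GraphIso p.1 p.2} :=
  ⟨analyticSet_graphIso, not_measurableSet_graphIso⟩
end
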